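/- Let X be a set, H a Hilbert space, A ⊆ B(H) a non-degenerate C*-algebra, and φ : X×X → CB(A, B(H)) a bounded function. Then φ is a Schur A-multiplier if and only if there exist a Hilbert space K, a non-degenerate *-representation ρ : A → B(K), and bounded functions V, W : X → B(H,K) such that φ(x,y)(a) = V(x)* ρ(a) W(y) for all x,y ∈ X and a ∈ A. Moreover, if φ is a Schur A-multiplier then V and W can be chosen so that ||φ||_m = sup_{x∈X} ||V(x)|| · sup_{y∈X} ||W(y)||. -/

import Mathlib

noncomputable section

open scoped ComplexOrder
open Matrix
open scoped ENNReal

/-- Positivity of a matrix over a (possibly non-unital) C*-algebra: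
`M` is positive iff it factors as `Nᴴ * N`. -/
def MatPos {R : Type*} [NonUnitalSemiring R] [StarRing R] {ν : Type*} [Fintype ν]
    (M : Matrix ν ν R) : Prop :=
  ∃ N : Matrix ν ν R, M = Nᴴ * N

/-- A linear map between C*-algebras is completely positive if all its matrix
amplifications preserve positivity. -/
def IsCompletelyPositive {R S : Type*} [NonUnitalSemiring R] [StarRing R] [Module ℂ R]
    [NonUnitalSemiring S] [StarRing S] [Module ℂ S] (Φ : R →ₗ[ℂ] S) : Prop :=
  ∀ (n : ℕ) (M : Matrix (Fin n) (Fin n) R), MatPos M → MatPos (M.map Φ)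

variable {H : Type*} [NormedAddCommGroup H] [InnerProductSpace ℂ H] [CompleteSpace H]

/-- The bounded operator on the Hilbert space `H ⊕₂ ⋯ ⊕₂ H` associated to an
operator-valued `n × n` matrix. -/
def matOp {ν : Type*} [Fintype ν] (M : Matrix ν ν (H →L[ℂ] H)) :
    PiLp 2 (fun _ : ν => H) →L[ℂ] PiLp 2 (fun _ : ν => H) :=
  ((PiLp.continuousLinearEquiv 2 ℂ (fun _ : ν => H)).symm :
      (∀ _ : ν, H) →L[ℂ] PiLp 2 (fun _ : ν => H)) ∘L
    (ContinuousLinearMap.pi fun i =>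
      (∑ j, (M i j) ∘L (ContinuousLinearMap.proj j)) ∘L
        ((PiLp.continuousLinearEquiv 2 ℂ (fun _ : ν => H)) :
          PiLp 2 (fun _ : ν => H) →L[ℂ] ∀ _ : ν, H))

variable {H : Type*} [NormedAddCommGroup H] [InnerProductSpace ℂ H] [CompleteSpace H]
variable {X : Type*}

/-- Evaluation at a point, as a continuous linear map `ℓ²(X,H) → H`. -/
def lpEval (x : X) : lp (fun _ : X => H) 2 →L[ℂ] H :=
  LinearMap.mkContinuous
    { toFun := fun f => f x
      map_add' := fun f g => by
        have := lp.coeFn_add f g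
        exact congrFun this x
      map_smul' := fun c f => by
        have := lp.coeFn_smul c f
        exact congrFun this x }
    1 (fun f => by
      simpa using lp.norm_apply_le_norm (by norm_num) f x)

/-- Inclusion of the `x`-th coordinate, as a continuous linear map `H → ℓ²(X,H)`. -/
def lpSingle (x : X) : H →L[ℂ] lp (fun _ : X => H) 2 := by
  classical
  exact LinearMap.mkContinuous
    { toFun := fun ξ => lp.single 2 x ξ
      map_add' := fun ξ η => by
        apply lp.ext
        funext j
        by_cases h : j = x
        · subst h; simp [lp.single_apply_self]
        · simp [lp.single_apply_ne _ _ _ h, lp.coeFn_add]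
      map_smul' := fun c ξ => by simp [lp.single_smul] }
    1 (fun ξ => by
      simpa using (lp.norm_single (p := 2) (by norm_num)
        (fun _ : X => ξ) x).le)

/-- The elementary operator `e_{x,y} ⊗ T` on `ℓ²(X,H)`. -/
def elemOp (x y : X) (T : H →L[ℂ] H) :
    lp (fun _ : X => H) 2 →L[ℂ] lp (fun _ : X => H) 2 :=
  (lpSingle x) ∘L T ∘L (lpEval y)

/-- The operator `T_k` on `ℓ²(X,H)` associated with a finitely supported kernel
`k : X × X → B(H)`; it is (defined to be) `0` if `k` is not finitely supported. -/
def TOp (k : X × X → (H →L[ℂ] H)) :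
    lp (fun _ : X => H) 2 →L[ℂ] lp (fun _ : X => H) 2 :=
  ∑ᶠ (p : X × X), elemOp p.1 p.2 (k p)

variable {G : Type*} [Group G]

/-- The left regular translation `λ_t` on `ℓ²(G,H)`. -/
def lam (t : G) : lp (fun _ : G => H) 2 →L[ℂ] lp (fun _ : G => H) 2 :=
  LinearMap.mkContinuous
    { toFun := fun f =>
        ⟨fun s => f (t⁻¹ * s), by
          apply memℓp_gen
          have hf : Summable fun s => ‖f s‖ ^ (2 : ℝ≥0∞).toReal :=
            (lp.memℓp f).summable (by norm_num)
          exact ((Equiv.mulLeft t⁻¹).summable_iff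
            (f := fun s => ‖f s‖ ^ (2 : ℝ≥0∞).toReal)).2 hf⟩
      map_add' := fun f g => by
        apply lp.ext; funext s
        exact congrFun (lp.coeFn_add f g) (t⁻¹ * s)
      map_smul' := fun c f => by
        apply lp.ext; funext s
        exact congrFun (lp.coeFn_smul c f) (t⁻¹ * s) }
    1 (fun f => by
      rw [one_mul]
      refine lp.norm_le_of_tsum_le (by norm_num) (norm_nonneg f) ?_
      have h1 : ∑' (s : G), ‖f (t⁻¹ * s)‖ ^ (2 : ℝ≥0∞).toReal
          = ∑' (s : G), ‖f s‖ ^ (2 : ℝ≥0∞).toReal :=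
        (Equiv.mulLeft t⁻¹).tsum_eq (fun s => ‖f s‖ ^ (2 : ℝ≥0∞).toReal)
      show ∑' (s : G), ‖f (t⁻¹ * s)‖ ^ (2 : ℝ≥0∞).toReal ≤ ‖f‖ ^ (2 : ℝ≥0∞).toReal
      rw [h1, ← lp.norm_rpow_eq_tsum (by norm_num) f])

/-- The diagonal ("block multiplication") operator on `ℓ²(X,H)` associated with a
uniformly bounded family of operators. -/
def diagOp (T : X → (H →L[ℂ] H)) (C : ℝ) (hC : ∀ x, ‖T x‖ ≤ C) :
    lp (fun _ : X => H) 2 →L[ℂ] lp (fun _ : X => H) 2 := by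
  have hC' : ∀ x, ‖T x‖ ≤ max C 0 := fun x => (hC x).trans (le_max_left _ _)
  have hr : (0:ℝ) < (2 : ℝ≥0∞).toReal := by norm_num
  have key : ∀ (f : lp (fun _ : X => H) 2) (x : X),
      ‖T x (f x)‖ ^ (2 : ℝ≥0∞).toReal
        ≤ (max C 0) ^ (2 : ℝ≥0∞).toReal * ‖f x‖ ^ (2 : ℝ≥0∞).toReal := by
    intro f x
    have h1 : ‖T x (f x)‖ ≤ max C 0 * ‖f x‖ :=
      ((T x).le_opNorm (f x)).trans
        (mul_le_mul_of_nonneg_right (hC' x) (norm_nonneg _))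
    calc ‖T x (f x)‖ ^ (2 : ℝ≥0∞).toReal
        ≤ (max C 0 * ‖f x‖) ^ (2 : ℝ≥0∞).toReal :=
          Real.rpow_le_rpow (norm_nonneg _) h1 hr.le
      _ = (max C 0) ^ (2 : ℝ≥0∞).toReal * ‖f x‖ ^ (2 : ℝ≥0∞).toReal :=
          Real.mul_rpow (le_max_right _ _) (norm_nonneg _)
  have mem : ∀ f : lp (fun _ : X => H) 2, Memℓp (fun x => T x (f x)) 2 := by
    intro f
    apply memℓp_gen
    exact Summable.of_nonneg_of_le
      (fun x => Real.rpow_nonneg (norm_nonneg _) _) (key f)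
      (((lp.memℓp f).summable hr).mul_left _)
  exact LinearMap.mkContinuous
    { toFun := fun f => ⟨fun x => T x (f x), mem f⟩
      map_add' := fun f g => by
        apply lp.ext; funext x
        have := congrFun (lp.coeFn_add f g) x
        show T x ((f + g) x) = _
        rw [this]
        exact map_add (T x) (f x) (g x)
      map_smul' := fun c f => by
        apply lp.ext; funext x
        have := congrFun (lp.coeFn_smul c f) x
        show T x ((c • f) x) = _
        rw [this]
        simp [lp.coeFn_smul] }
    (max C 0) (fun f => by
      refine lp.norm_le_of_tsum_le hr (by positivity) ?_
      show ∑' (x : X), ‖T x (f x)‖ ^ (2 : ℝ≥0∞).toReal ≤ _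
      calc ∑' (x : X), ‖T x (f x)‖ ^ (2 : ℝ≥0∞).toReal
          ≤ ∑' (x : X), (max C 0) ^ (2 : ℝ≥0∞).toReal * ‖f x‖ ^ (2 : ℝ≥0∞).toReal :=
            Summable.tsum_le_tsum (key f)
              (Summable.of_nonneg_of_le
                (fun x => Real.rpow_nonneg (norm_nonneg _) _) (key f)
                (((lp.memℓp f).summable hr).mul_left _))
              (((lp.memℓp f).summable hr).mul_left _)
        _ = (max C 0) ^ (2 : ℝ≥0∞).toReal * ∑' (x : X), ‖f x‖ ^ (2 : ℝ≥0∞).toReal :=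
            tsum_mul_left
        _ = (max C 0) ^ (2 : ℝ≥0∞).toReal * ‖f‖ ^ (2 : ℝ≥0∞).toReal := by
            rw [lp.norm_rpow_eq_tsum hr]
        _ = (max C 0 * ‖f‖) ^ (2 : ℝ≥0∞).toReal :=
            (Real.mul_rpow (by positivity) (norm_nonneg _)).symm)

section CB

variable {A' B' : Type*} [AddCommMonoid A'] [Module ℂ A'] [AddCommMonoid B'] [Module ℂ B']
variable {K : Type*} [NormedAddCommGroup K] [InnerProductSpace ℂ K] [CompleteSpace K]

/-- All matrix amplifications of `Φ` are bounded by `C`, where matrices over the abstract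
spaces are normed through the given embeddings into concrete operator algebras. -/
def CBBound (ιA : A' → (H →L[ℂ] H)) (ιB : B' → (K →L[ℂ] K))
    (Φ : A' →ₗ[ℂ] B') (C : ℝ) : Prop :=
  ∀ (n : ℕ) (M : Matrix (Fin n) (Fin n) A'),
    ‖matOp (M.map (fun a => ιB (Φ a)))‖ ≤ C * ‖matOp (M.map ιA)‖

/-- Complete boundedness of a linear map, relative to embeddings of its domain and
codomain into concrete operator algebras. -/
def IsCB (ιA : A' → (H →L[ℂ] H)) (ιB : B' → (K →L[ℂ] K)) (Φ : A' →ₗ[ℂ] B') : Prop :=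
  ∃ C : ℝ, 0 ≤ C ∧ CBBound ιA ιB Φ C

/-- The completely bounded norm of a linear map, relative to embeddings of its domain
and codomain into concrete operator algebras. -/
def cbNorm (ιA : A' → (H →L[ℂ] H)) (ιB : B' → (K →L[ℂ] K)) (Φ : A' →ₗ[ℂ] B') : ℝ :=
  sInf { C : ℝ | 0 ≤ C ∧ CBBound ιA ιB Φ C }

end CB

section Schur

variable {A : Type*} [NonUnitalCStarAlgebra A]

/-- A *-representation is non-degenerate if the span of the vectors in its range is dense. -/
def NondegenerateRep {K : Type*} [NormedAddCommGroup K] [InnerProductSpace ℂ K]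
    [CompleteSpace K] (ρ : A →⋆ₙₐ[ℂ] (K →L[ℂ] K)) : Prop :=
  Dense (Submodule.span ℂ {ξ : K | ∃ (a : A) (v : K), ρ a v = ξ} : Set K)

/-- A function `φ : X × X → CB(A, B(H))` is of positive type if it maps positive
matrices to positive matrices, entrywise. -/
def PositiveType (φ : X → X → (A →ₗ[ℂ] (H →L[ℂ] H))) : Prop :=
  ∀ (m : ℕ) (x : Fin m → X) (a : Matrix (Fin m) (Fin m) A),
    MatPos a → MatPos (Matrix.of fun p q => φ (x p) (x q) (a p q))

/-- A kernel `k : X × X → A` is positive definite if all the matrices obtained by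
sampling it at finitely many points are positive. -/
def PosDefKernel (k : X × X → A) : Prop :=
  ∀ (n : ℕ) (x : Fin n → X), MatPos (Matrix.of fun i j => k (x i, x j))

/-- The operator `T_k` on `ℓ²(X,H)` of a kernel `k : X × X → A`, via the embedding
`ι : A → B(H)` (it is `0` unless `k` is finitely supported). -/
def TKer (ι : A →⋆ₙₐ[ℂ] (H →L[ℂ] H)) (k : X × X → A) :
    lp (fun _ : X => H) 2 →L[ℂ] lp (fun _ : X => H) 2 :=
  TOp (fun p => ι (k p))

/-- `C` is a complete bound for the Schur multiplication map `S_φ : T_k ↦ T_{φ·k}`,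
tested on (matrices of) finitely supported kernels, which span a dense subspace of
`K(ℓ²(X)) ⊗ A`. -/
def SchurBound (ι : A →⋆ₙₐ[ℂ] (H →L[ℂ] H)) (φ : X → X → (A →ₗ[ℂ] (H →L[ℂ] H)))
    (C : ℝ) : Prop :=
  ∀ (n : ℕ) (k : Fin n → Fin n → (X × X → A)),
    (∀ i j, (Function.support (k i j)).Finite) →
    ‖matOp (Matrix.of fun i j => TOp (fun p => φ p.1 p.2 (k i j p)))‖
      ≤ C * ‖matOp (Matrix.of fun i j => TKer ι (k i j))‖

/-- `φ` is a Schur `A`-multiplier: the map `S_φ : T_k ↦ T_{φ·k}` is completely bounded. -/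
def IsSchurMultiplier (ι : A →⋆ₙₐ[ℂ] (H →L[ℂ] H))
    (φ : X → X → (A →ₗ[ℂ] (H →L[ℂ] H))) : Prop :=
  ∃ C : ℝ, 0 ≤ C ∧ SchurBound ι φ C

/-- The multiplier norm `‖φ‖_m = ‖S_φ‖_cb` of a Schur `A`-multiplier. -/
def schurNorm (ι : A →⋆ₙₐ[ℂ] (H →L[ℂ] H))
    (φ : X → X → (A →ₗ[ℂ] (H →L[ℂ] H))) : ℝ :=
  sInf { C : ℝ | 0 ≤ C ∧ SchurBound ι φ C }

/-- Complete positivity of the map `S_φ : K(ℓ²(X)) ⊗ A → K(ℓ²(X)) ⊗ B(H)`, tested on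
(matrices of) finitely supported kernels. -/
def SchurCP (ι : A →⋆ₙₐ[ℂ] (H →L[ℂ] H)) (φ : X → X → (A →ₗ[ℂ] (H →L[ℂ] H))) : Prop :=
  ∀ (n : ℕ) (k : Fin n → Fin n → (X × X → A)),
    (∀ i j, (Function.support (k i j)).Finite) →
    MatPos (Matrix.of fun i j => TKer ι (k i j)) →
    MatPos (Matrix.of fun i j => TOp (fun p => φ p.1 p.2 (k i j p)))

end Schur

section Dynamics

variable {A : Type*} [NonUnitalCStarAlgebra A]

/-- `α` is an action of the group `G` on `A` by *-automorphisms. -/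
def IsAction (α : G → A ≃⋆ₐ[ℂ] A) : Prop :=
  (∀ a, α 1 a = a) ∧ ∀ s t : G, ∀ a : A, α (s * t) a = α s (α t a)

/-- A *-automorphism of `A`, as a `ℂ`-linear map. -/
def autLin (e : A ≃⋆ₐ[ℂ] A) : A →ₗ[ℂ] A :=
  { toFun := e
    map_add' := fun a b => map_add e a b
    map_smul' := fun c a => map_smul e c a }

/-- The representation `π` of `A` on `ℓ²(G,H)`: `(π(a)ξ)(s) = α_{s⁻¹}(a)(ξ(s))`. -/
def piRep (ι : A →⋆ₙₐ[ℂ] (H →L[ℂ] H)) (α : G → A ≃⋆ₐ[ℂ] A) (a : A) :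
    lp (fun _ : G => H) 2 →L[ℂ] lp (fun _ : G => H) 2 :=
  diagOp (fun s => ι (α s⁻¹ a)) ‖a‖ (fun s =>
    (NonUnitalStarAlgHom.norm_apply_le ι (α s⁻¹ a)).trans_eq
      (StarAlgEquiv.norm_map (α s⁻¹) a))

/-- The reduced crossed product `A ⋊_{α,r} G`, realised concretely on `ℓ²(G,H)` as the
norm closure of the linear span of the operators `π(a)λ_t`. -/
def CrossedSet (ι : A →⋆ₙₐ[ℂ] (H →L[ℂ] H)) (α : G → A ≃⋆ₐ[ℂ] A) :
    Set (lp (fun _ : G => H) 2 →L[ℂ] lp (fun _ : G => H) 2) :=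
  closure (Submodule.span ℂ
    {x | ∃ (a : A) (t : G), x = piRep ι α a * lam t} : Set _)

/-- `E` is the canonical conditional expectation of the reduced crossed product onto `A`:
it is characterised by `ι (E x) = (x)_{e,e}`, the `(e,e)` matrix entry of `x`. -/
def IsCondExp (ι : A →⋆ₙₐ[ℂ] (H →L[ℂ] H)) (α : G → A ≃⋆ₐ[ℂ] A)
    (E : (lp (fun _ : G => H) 2 →L[ℂ] lp (fun _ : G => H) 2) →ₗ[ℂ] A) : Prop :=
  ∀ x ∈ CrossedSet ι α, ι (E x) = (lpEval (1 : G)) ∘L x ∘L (lpSingle (1 : G))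

/-- The defining property of the map `S_F` associated with `F : G → CB(A)`:
`S_F(π(a)λ_s) = π(F(s)(a))λ_s`. -/
def HSGenProp (ι : A →⋆ₙₐ[ℂ] (H →L[ℂ] H)) (α : G → A ≃⋆ₐ[ℂ] A)
    (F : G → (A →ₗ[ℂ] A))
    (Φ : (lp (fun _ : G => H) 2 →L[ℂ] lp (fun _ : G => H) 2) →ₗ[ℂ]
         (lp (fun _ : G => H) 2 →L[ℂ] lp (fun _ : G => H) 2)) : Prop :=
  ∀ (a : A) (s : G), Φ (piRep ι α a * lam s) = piRep ι α (F s a) * lam s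

/-- `Φ` maps the reduced crossed product into itself and, on matrices over the reduced
crossed product, all amplifications of `Φ` are bounded by `C`. -/
def CBBoundOnCrossed (ι : A →⋆ₙₐ[ℂ] (H →L[ℂ] H)) (α : G → A ≃⋆ₐ[ℂ] A)
    (Φ : (lp (fun _ : G => H) 2 →L[ℂ] lp (fun _ : G => H) 2) →ₗ[ℂ]
         (lp (fun _ : G => H) 2 →L[ℂ] lp (fun _ : G => H) 2)) (C : ℝ) : Prop :=
  ∀ (n : ℕ) (M : Matrix (Fin n) (Fin n)
      (lp (fun _ : G => H) 2 →L[ℂ] lp (fun _ : G => H) 2)),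
    (∀ i j, M i j ∈ CrossedSet ι α) →
      ‖matOp (M.map Φ)‖ ≤ C * ‖matOp M‖

/-- `Φ` is completely positive on the reduced crossed product: matrices over the crossed
product which are positive are mapped to positive matrices. -/
def CPOnCrossed (ι : A →⋆ₙₐ[ℂ] (H →L[ℂ] H)) (α : G → A ≃⋆ₐ[ℂ] A)
    (Φ : (lp (fun _ : G => H) 2 →L[ℂ] lp (fun _ : G => H) 2) →ₗ[ℂ]
         (lp (fun _ : G => H) 2 →L[ℂ] lp (fun _ : G => H) 2)) : Prop :=
  (∀ x ∈ CrossedSet ι α, Φ x ∈ CrossedSet ι α) ∧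
  ∀ (n : ℕ) (M : Matrix (Fin n) (Fin n)
      (lp (fun _ : G => H) 2 →L[ℂ] lp (fun _ : G => H) 2)),
    (∀ i j, M i j ∈ CrossedSet ι α) → MatPos M → MatPos (M.map Φ)

/-- `F : G → CB(A)` is a Herz-Schur `(A,G,α)`-multiplier: the map `S_F` determined by
`S_F(π(a)λ_s) = π(F(s)(a))λ_s` extends to a completely bounded map on `A ⋊_{α,r} G`. -/
def IsHerzSchurMultiplier (ι : A →⋆ₙₐ[ℂ] (H →L[ℂ] H)) (α : G → A ≃⋆ₐ[ℂ] A)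
    (F : G → (A →ₗ[ℂ] A)) : Prop :=
  ∃ Φ, HSGenProp ι α F Φ ∧ (∀ x ∈ CrossedSet ι α, Φ x ∈ CrossedSet ι α) ∧
    ∃ C : ℝ, 0 ≤ C ∧ CBBoundOnCrossed ι α Φ C

/-- `F : G → CB(A)` is a completely positive Herz-Schur `(A,G,α)`-multiplier: the map
`S_F` extends to a completely positive (hence completely bounded) map on `A ⋊_{α,r} G`. -/
def IsHerzSchurMultiplierCP (ι : A →⋆ₙₐ[ℂ] (H →L[ℂ] H)) (α : G → A ≃⋆ₐ[ℂ] A)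
    (F : G → (A →ₗ[ℂ] A)) : Prop :=
  ∃ Φ, HSGenProp ι α F Φ ∧ CPOnCrossed ι α Φ ∧
    ∃ C : ℝ, 0 ≤ C ∧ CBBoundOnCrossed ι α Φ C

/-- The function `N(F) : G × G → CB(A)`, `N(F)(s,t)(a) = α_{s⁻¹}(F(st⁻¹)(α_s(a)))`. -/
def NF (α : G → A ≃⋆ₐ[ℂ] A) (F : G → (A →ₗ[ℂ] A)) : G → G → (A →ₗ[ℂ] A) :=
  fun s t => (autLin (α s⁻¹)) ∘ₗ (F (s * t⁻¹)) ∘ₗ (autLin (α s))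

end Dynamics

section Trace

variable {A : Type*} [NonUnitalCStarAlgebra A]

/-- `τ` is a positive linear functional. -/
def IsPositiveFunctional (τ : A →ₗ[ℂ] ℂ) : Prop :=
  ∀ a : A, 0 ≤ τ (star a * a)

/-- `τ` is tracial. -/
def IsTracial (τ : A →ₗ[ℂ] ℂ) : Prop :=
  ∀ a b : A, τ (a * b) = τ (b * a)

/-- `τ` is faithful. -/
def IsFaithfulFunctional (τ : A →ₗ[ℂ] ℂ) : Prop :=
  ∀ a : A, τ (star a * a) = 0 → a = 0

/-- The `L²`-norm `‖a‖_{2,τ} = τ(a*a)^{1/2}` associated with a positive functional `τ`. -/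
def l2norm (τ : A →ₗ[ℂ] ℂ) (a : A) : ℝ :=
  Real.sqrt (τ (star a * a)).re

/-- A map `Φ : A → A` is `L²`-bounded by `C` with respect to `τ`. -/
def L2BoundedBy (τ : A →ₗ[ℂ] ℂ) (Φ : A →ₗ[ℂ] A) (C : ℝ) : Prop :=
  ∀ a : A, l2norm τ (Φ a) ≤ C * l2norm τ a

/-- A map `Φ : A → A` is `L²`-bounded with respect to `τ`, i.e. it extends to a bounded
operator `T_Φ` on `L²(A,τ)`. -/
def L2Bounded (τ : A →ₗ[ℂ] ℂ) (Φ : A →ₗ[ℂ] A) : Prop :=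
  ∃ C : ℝ, 0 ≤ C ∧ L2BoundedBy τ Φ C

/-- The norm of the extension `T_Φ` of `Φ` to `L²(A,τ)`. -/
def l2OpNorm (τ : A →ₗ[ℂ] ℂ) (Φ : A →ₗ[ℂ] A) : ℝ :=
  sInf { C : ℝ | 0 ≤ C ∧ L2BoundedBy τ Φ C }

/-- `Φ` is `L²`-compact with respect to `τ`: the image under `Φ` of the `L²`-unit ball of
`A` is totally bounded in the `L²`-norm; equivalently, the extension `T_Φ` of `Φ` to
`L²(A,τ)` is a compact operator. -/
def L2Compact (τ : A →ₗ[ℂ] ℂ) (Φ : A →ₗ[ℂ] A) : Prop :=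
  ∀ ε : ℝ, 0 < ε → ∃ S : Finset A, ∀ a : A, l2norm τ a ≤ 1 →
    ∃ b ∈ S, l2norm τ (Φ a - b) < ε

end Trace

section Props

variable {A : Type*} [CStarAlgebra A]

/-- The pair `(A,τ)` has the C*-algebra Haagerup property (Definition 3.1, Dong). -/
def CStarHaagerup (τ : A →ₗ[ℂ] ℂ) : Prop :=
  ∃ (I : Type) (_ : Nonempty I) (_ : SemilatticeSup I) (Φ : I → (A →ₗ[ℂ] A)),
    (∀ i, Φ i 1 = 1) ∧
    (∀ i, IsCompletelyPositive (Φ i)) ∧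
    (∀ i (a : A), τ (Φ i (star a * a)) ≤ τ (star a * a)) ∧
    (∀ i, L2Compact τ (Φ i)) ∧
    (∀ a : A, Filter.Tendsto (fun i => l2norm τ (Φ i a - a)) Filter.atTop (nhds 0))

/-- `A` is a nuclear C*-algebra: there is a net of finite-rank completely positive
contractions converging to the identity in the point-norm topology. -/
def NuclearCStarAlgebra (A : Type*) [NonUnitalCStarAlgebra A] : Prop :=
  ∃ (I : Type) (_ : Nonempty I) (_ : SemilatticeSup I) (Φ : I → (A →ₗ[ℂ] A)),
    (∀ i, IsCompletelyPositive (Φ i)) ∧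
    (∀ i (a : A), ‖Φ i a‖ ≤ ‖a‖) ∧
    (∀ i, FiniteDimensional ℂ (LinearMap.range (Φ i))) ∧
    (∀ a : A, Filter.Tendsto (fun i => ‖Φ i a - a‖) Filter.atTop (nhds 0))

/-- A discrete group `G` has the Haagerup property: there is a net of normalised
positive-definite functions on `G`, vanishing at infinity, converging pointwise to `1`. -/
def GroupHaagerup (G : Type*) [Group G] : Prop :=
  ∃ (I : Type) (_ : Nonempty I) (_ : SemilatticeSup I) (φ : I → G → ℂ),
    (∀ i, φ i 1 = 1) ∧
    (∀ i (n : ℕ) (s : Fin n → G) (μ : Fin n → ℂ),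
      0 ≤ ∑ k, ∑ l, (starRingEnd ℂ) (μ k) * φ i ((s k)⁻¹ * s l) * μ l) ∧
    (∀ i, ∀ ε : ℝ, 0 < ε → ∃ S : Finset G, ∀ s ∉ S, ‖φ i s‖ ≤ ε) ∧
    (∀ s : G, Filter.Tendsto (fun i => φ i s) Filter.atTop (nhds 1))

end Props

section More

variable {A : Type*} [NonUnitalCStarAlgebra A]

/-- A star homomorphism, as a `ℂ`-linear map. -/
def iotaLin {B : Type*} [NonUnitalCStarAlgebra B] (ι : A →⋆ₙₐ[ℂ] B) : A →ₗ[ℂ] B :=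
  { toFun := ι
    map_add' := fun a b => map_add ι a b
    map_smul' := fun c a => map_smul ι c a }

/-- A function `φ : X × X → CB(A)` with values in the maps on `A` is of positive type. -/
def PositiveTypeA (φ : X → X → (A →ₗ[ℂ] A)) : Prop :=
  ∀ (m : ℕ) (x : Fin m → X) (a : Matrix (Fin m) (Fin m) A),
    MatPos a → MatPos (Matrix.of fun p q => φ (x p) (x q) (a p q))

/-- The representation `π` of `A` on `ℓ²(G,H)`, as a linear map. -/
def piRepLin (ι : A →⋆ₙₐ[ℂ] (H →L[ℂ] H)) (α : G → A ≃⋆ₐ[ℂ] A) :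
    A →ₗ[ℂ] (lp (fun _ : G => H) 2 →L[ℂ] lp (fun _ : G => H) 2) :=
  { toFun := piRep ι α
    map_add' := fun a b => by
      apply ContinuousLinearMap.ext; intro f
      apply lp.ext; funext s
      have h1 : (((piRep ι α a + piRep ι α b) f :
          lp (fun _ : G => H) 2) : ∀ _ : G, H) s
          = ((piRep ι α a f : ∀ _ : G, H) s) + ((piRep ι α b f : ∀ _ : G, H) s) := by
        rw [ContinuousLinearMap.add_apply]
        exact congrFun (lp.coeFn_add (piRep ι α a f) (piRep ι α b f)) s
      show ι (α s⁻¹ (a + b)) (f s) = _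
      rw [h1]
      show _ = ι (α s⁻¹ a) (f s) + ι (α s⁻¹ b) (f s)
      rw [map_add (α s⁻¹), map_add ι, ContinuousLinearMap.add_apply]
    map_smul' := fun c a => by
      apply ContinuousLinearMap.ext; intro f
      apply lp.ext; funext s
      have h1 : (((c • piRep ι α a) f :
          lp (fun _ : G => H) 2) : ∀ _ : G, H) s
          = c • ((piRep ι α a f : ∀ _ : G, H) s) := by
        rw [ContinuousLinearMap.smul_apply]
        exact congrFun (lp.coeFn_smul c (piRep ι α a f)) s
      show ι (α s⁻¹ (c • a)) (f s) = _
      rw [RingHom.id_apply, h1]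
      show _ = c • ι (α s⁻¹ a) (f s)
      rw [map_smul (α s⁻¹), map_smul ι, ContinuousLinearMap.smul_apply] }

/-- The completely bounded norm of a map defined on the reduced crossed product. -/
def cbNormOnCrossed (ι : A →⋆ₙₐ[ℂ] (H →L[ℂ] H)) (α : G → A ≃⋆ₐ[ℂ] A)
    (Φ : (lp (fun _ : G => H) 2 →L[ℂ] lp (fun _ : G => H) 2) →ₗ[ℂ]
         (lp (fun _ : G => H) 2 →L[ℂ] lp (fun _ : G => H) 2)) : ℝ :=
  sInf { C : ℝ | 0 ≤ C ∧ CBBoundOnCrossed ι α Φ C }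

/-- The `L²`-norm `‖x‖_{2,τ'}` on the reduced crossed product induced by the trace
`τ' = τ ∘ E`. -/
def l2normCr (τ : A →ₗ[ℂ] ℂ)
    (E : (lp (fun _ : G => H) 2 →L[ℂ] lp (fun _ : G => H) 2) →ₗ[ℂ] A)
    (x : lp (fun _ : G => H) 2 →L[ℂ] lp (fun _ : G => H) 2) : ℝ :=
  Real.sqrt (τ (E (star x * x))).re

/-- The map `h_Φ : G → CB(A)` associated with a map `Φ` on the reduced crossed product:
`h_Φ(s)(a) = E(Φ(π(a)λ_s)λ_s*)`. -/
def hMap (ι : A →⋆ₙₐ[ℂ] (H →L[ℂ] H)) (α : G → A ≃⋆ₐ[ℂ] A)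
    (E : (lp (fun _ : G => H) 2 →L[ℂ] lp (fun _ : G => H) 2) →ₗ[ℂ] A)
    (Φ : (lp (fun _ : G => H) 2 →L[ℂ] lp (fun _ : G => H) 2) →ₗ[ℂ]
         (lp (fun _ : G => H) 2 →L[ℂ] lp (fun _ : G => H) 2))
    (s : G) : A →ₗ[ℂ] A :=
  E ∘ₗ (LinearMap.mulRight ℂ (star (lam s))) ∘ₗ Φ ∘ₗ
    (LinearMap.mulRight ℂ (lam (H := H) s)) ∘ₗ piRepLin ι α

end More

section BigProps

open Filter

variable {A : Type*} [CStarAlgebra A]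

/-- The Haagerup property for the `C*`-dynamical system `(A,G,α,τ)` (Definition 3.3). -/
def DynHaagerup (ι : A →⋆ₙₐ[ℂ] (H →L[ℂ] H)) (α : G → A ≃⋆ₐ[ℂ] A)
    (τ : A →ₗ[ℂ] ℂ) : Prop :=
  ∃ (I : Type) (_ : Nonempty I) (_ : SemilatticeSup I) (F : I → G → (A →ₗ[ℂ] A)),
    (∀ i, IsHerzSchurMultiplierCP ι α (F i)) ∧
    (∀ i, F i 1 1 = 1) ∧
    (∀ i (a : A), τ (F i 1 (star a * a)) ≤ τ (star a * a)) ∧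
    (∀ i (t : G), L2Compact τ (F i t)) ∧
    (∀ i, ∀ ε : ℝ, 0 < ε → ∃ S : Finset G, ∀ s ∉ S, l2OpNorm τ (F i s) ≤ ε) ∧
    (∀ (t : G) (a : A),
      Tendsto (fun i => l2norm τ (F i t a - a)) atTop (nhds 0))

/-- The C*-algebra Haagerup property for the reduced crossed product `A ⋊_{α,r} G`
endowed with the induced trace `τ' = τ ∘ E` (Definition 3.1). -/
def CrossedCStarHaagerup (ι : A →⋆ₙₐ[ℂ] (H →L[ℂ] H)) (α : G → A ≃⋆ₐ[ℂ] A)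
    (τ : A →ₗ[ℂ] ℂ)
    (E : (lp (fun _ : G => H) 2 →L[ℂ] lp (fun _ : G => H) 2) →ₗ[ℂ] A) : Prop :=
  ∃ (I : Type) (_ : Nonempty I) (_ : SemilatticeSup I)
    (Φ : I → ((lp (fun _ : G => H) 2 →L[ℂ] lp (fun _ : G => H) 2) →ₗ[ℂ]
              (lp (fun _ : G => H) 2 →L[ℂ] lp (fun _ : G => H) 2))),
    (∀ i, Φ i 1 = 1) ∧
    (∀ i, CPOnCrossed ι α (Φ i)) ∧
    (∀ i, ∀ x ∈ CrossedSet ι α, τ (E (Φ i (star x * x))) ≤ τ (E (star x * x))) ∧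
    (∀ i, ∀ ε : ℝ, 0 < ε →
      ∃ S : Finset (lp (fun _ : G => H) 2 →L[ℂ] lp (fun _ : G => H) 2),
        ∀ x ∈ CrossedSet ι α, l2normCr τ E x ≤ 1 →
          ∃ b ∈ S, l2normCr τ E (Φ i x - b) < ε) ∧
    (∀ x ∈ CrossedSet ι α,
      Tendsto (fun i => l2normCr τ E (Φ i x - x)) atTop (nhds 0))

end BigProps

section Nuc

open Filter

variable {A : Type*} [NonUnitalCStarAlgebra A]

/-- Nuclearity of the reduced crossed product `A ⋊_{α,r} G`: there is a net of
finite-rank completely positive contractions on it converging to the identity in the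
point-norm topology. -/
def CrossedNuclear (ι : A →⋆ₙₐ[ℂ] (H →L[ℂ] H)) (α : G → A ≃⋆ₐ[ℂ] A) : Prop :=
  ∃ (I : Type) (_ : Nonempty I) (_ : SemilatticeSup I)
    (Φ : I → ((lp (fun _ : G => H) 2 →L[ℂ] lp (fun _ : G => H) 2) →ₗ[ℂ]
              (lp (fun _ : G => H) 2 →L[ℂ] lp (fun _ : G => H) 2))),
    (∀ i, CPOnCrossed ι α (Φ i)) ∧
    (∀ i, ∀ x ∈ CrossedSet ι α, ‖Φ i x‖ ≤ ‖x‖) ∧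
    (∀ i, FiniteDimensional ℂ
      (Submodule.span ℂ ((fun x => Φ i x) '' CrossedSet ι α))) ∧
    (∀ x ∈ CrossedSet ι α, Tendsto (fun i => ‖Φ i x - x‖) atTop (nhds 0))

/-- Nuclearity of the `C*`-dynamical system `(A,G,α)` (Definition 4.2): a net of
completely positive, finitely supported Herz-Schur multipliers, with `‖F_i(e)‖_cb ≤ 1`,
with finite-rank values, converging to the identity pointwise in norm. -/
def DynNuclear (ι : A →⋆ₙₐ[ℂ] (H →L[ℂ] H)) (α : G → A ≃⋆ₐ[ℂ] A) : Prop :=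
  ∃ (I : Type) (_ : Nonempty I) (_ : SemilatticeSup I) (F : I → G → (A →ₗ[ℂ] A)),
    (∀ i, IsHerzSchurMultiplierCP ι α (F i)) ∧
    (∀ i, (Function.support (F i)).Finite) ∧
    (∀ i, CBBound (fun a => ι a) (fun a => ι a) (F i 1) 1) ∧
    (∀ i (s : G), FiniteDimensional ℂ (LinearMap.range (F i s))) ∧
    (∀ (s : G) (a : A), Tendsto (fun i => ‖F i s a - a‖) atTop (nhds 0))

end Nuc

section Amen

open Filter

variable {A : Type*} [CStarAlgebra A]

/-- Amenability of the action `α` of a discrete group `G` on a unital C*-algebra `A`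
(Definition 4.5): a net of finitely supported functions `T_i : G → Z(A)⁺` with
`Σ_s T_i(s)² = 1` and `‖Σ_s (T_i(s) - α_t(T_i(t⁻¹s)))*(T_i(s) - α_t(T_i(t⁻¹s)))‖ → 0`. -/
def AmenableAction {G : Type*} [Group G] (α : G → A ≃⋆ₐ[ℂ] A) : Prop :=
  ∃ (I : Type) (_ : Nonempty I) (_ : SemilatticeSup I) (T : I → G → A),
    (∀ i, (Function.support (T i)).Finite) ∧
    (∀ i (s : G) (c : A), Commute (T i s) c) ∧
    (∀ i (s : G), ∃ b : A, T i s = star b * b) ∧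
    (∀ i, ∑ᶠ s : G, T i s * T i s = 1) ∧
    (∀ t : G, Tendsto (fun i =>
        ‖∑ᶠ s : G, star (T i s - α t (T i (t⁻¹ * s))) *
          (T i s - α t (T i (t⁻¹ * s)))‖) atTop (nhds 0))

end Amen

universe u v w

/-- Data for a Stinespring-type representation of an operator-valued function on
`X × X`: a Hilbert space `K`, a *-representation `ρ : A → B(K)` and
families of operators `V, W : X → B(H,K)`. -/
structure OpValuedRep (A : Type u) [NonUnitalCStarAlgebra A]
    (H : Type v) [NormedAddCommGroup H] [InnerProductSpace ℂ H] [CompleteSpace H]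
    (X : Type w) where
  /-- the Hilbert space of the representation -/
  K : Type (max u v w)
  [nacg : NormedAddCommGroup K]
  [ips : InnerProductSpace ℂ K]
  [cpl : CompleteSpace K]
  /-- the representation -/
  ρ : A →⋆ₙₐ[ℂ] (K →L[ℂ] K)
  /-- the left family of operators -/
  V : X → (H →L[ℂ] K)
  /-- the right family of operators -/
  W : X → (H →L[ℂ] K)

attribute [instance] OpValuedRep.nacg OpValuedRep.ips OpValuedRep.cpl

end
noncomputable section
open scoped ComplexOrder ENNReal
open Matrix

/-!
If `φ` is a Schur multiplier with bound `C`, a Hahn–Banach argument yields a positive linear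
functional `𝓛` on functions of pairs `(ξ, η)` of linear maps `(X →₀ H) → H` such that
`𝓛 (⟪ξ (δₓ ⊗ h), ι a (η (δ_y ⊗ g))⟫) = ⟪h, φ x y a g⟫`, while `𝓛 (‖ξ (δₓ ⊗ h)‖²)` and
`𝓛 (‖η (δₓ ⊗ h)‖²)` are at most `C ‖h‖²`. Let `A` act pointwise on the Hilbert space `L²(𝓛; H)`.
The operators `V x h = ((ξ, η) ↦ ξ (δₓ ⊗ h))` and `W y g = ((ξ, η) ↦ η (δ_y ⊗ g))` have norm at
most `√C` and represent `φ`; projecting onto the essential subspace makes the representation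
non-degenerate. Conversely, `V(x)* ρ(·) W(y)` is a compression of an amplification of `ρ`, and
amplifications of `ρ` are contractive for the norms that the faithful representation `ι` defines.
-/

section Extension

variable {𝕜 E F G : Type*} [Field 𝕜] [AddCommGroup E] [Module 𝕜 E]
  [AddCommGroup F] [Module 𝕜 F] [AddCommGroup G] [Module 𝕜 G]

theorem exists_linearMap_comp_eq_of_ker_le (u : E →ₗ[𝕜] F) (f : E →ₗ[𝕜] G)
    (h : LinearMap.ker u ≤ LinearMap.ker f) : ∃ g : F →ₗ[𝕜] G, g ∘ₗ u = f := by
  obtain ⟨g, hg⟩ := LinearMap.exists_extend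
    ((LinearMap.ker u).liftQ f h ∘ₗ u.quotKerEquivRange.symm.toLinearMap)
  refine ⟨g, LinearMap.ext fun x => ?_⟩
  have hgx := LinearMap.congr_fun hg ⟨u x, LinearMap.mem_range_self u x⟩
  simpa only [LinearMap.coe_comp, Function.comp_apply, Submodule.subtype_apply,
    LinearEquiv.coe_coe, LinearMap.quotKerEquivRange_symm_apply_image, Submodule.mkQ_apply,
    Submodule.liftQ_apply] using hgx

theorem exists_linearMap_le_of_epigraph {M D : Type*} [AddCommGroup M] [Module ℝ M]
    [AddCommGroup D] [Module ℝ D] (S : PointedCone ℝ (M × ℝ)) (T : D →ₗ[ℝ] M) (F : D →ₗ[ℝ] ℝ)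
    (hS : ∀ f : M, ∃ t, (f, t) ∈ S) (hF : ∀ d t, (T d, t) ∈ S → F d ≤ t) :
    ∃ L : M →ₗ[ℝ] ℝ, L ∘ₗ T = F ∧ ∀ f t, (f, t) ∈ S → L f ≤ t := by
  have ker_le : LinearMap.ker T ≤ LinearMap.ker F := by
    intro d (hd : T d = 0)
    obtain ⟨t, ht⟩ := hS 0
    have bound (c : ℝ) : c * F d ≤ t := by
      simpa using hF (c • d) t (by simpa [hd] using ht)
    by_contra hne
    have := bound ((t + 1) / F d)
    rw [div_mul_cancel₀ _ hne] at this
    linarith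
  obtain ⟨F', rfl⟩ := exists_linearMap_comp_eq_of_ker_le T F ker_le
  let excess : (M × ℝ) →ₗ[ℝ] ℝ := LinearMap.snd ℝ M ℝ - F' ∘ₗ LinearMap.fst ℝ M ℝ
  let dom : Submodule ℝ (M × ℝ) := (LinearMap.range T).prod ⊤
  obtain ⟨g, hg_dom, hg_nonneg⟩ := riesz_extension S ⟨dom, excess ∘ₗ dom.subtype⟩
    (by
      rintro ⟨⟨m, t⟩, hm⟩ hdt
      obtain ⟨d, rfl⟩ : ∃ d, T d = m := hm.1
      exact sub_nonneg.2 (hF d t hdt))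
    (by
      rintro ⟨f, s⟩
      obtain ⟨t, ht⟩ := hS f
      exact ⟨⟨(0, t - s), ⟨zero_mem _, trivial⟩⟩, by simpa using ht⟩)
  have g_snd (t : ℝ) : g (0, t) = t := by
    simpa [excess] using hg_dom ⟨(0, t), ⟨zero_mem _, trivial⟩⟩
  refine ⟨-(g ∘ₗ LinearMap.inl ℝ M ℝ), LinearMap.ext fun d => ?_, fun f t hft => ?_⟩
  · have := hg_dom ⟨(T d, 0), ⟨⟨d, rfl⟩, trivial⟩⟩
    simp_all [excess]
  · have g_eq_add : g (f, t) = g (f, 0) + t := by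
      rw [← g_snd t, ← map_add, g_snd]; simp
    have := hg_nonneg _ hft
    simp only [LinearMap.neg_apply, LinearMap.coe_comp, Function.comp_apply, LinearMap.inl_apply]
    linarith

end Extension

open scoped NNReal ComplexConjugate InnerProductSpace

/-- A positive linear functional on an ideal of real functions, in the manner of the Daniell
integral but with no continuity requirement. The functional is total; its values off `domain` are
junk. -/
structure DaniellFunctional (Ξ : Type*) where
  domain : Submodule ℝ (Ξ → ℝ)
  mem_domain_of_abs_le : ∀ {f g : Ξ → ℝ}, g ∈ domain → |f| ≤ g → f ∈ domain
  toLinearMap : (Ξ → ℝ) →ₗ[ℝ] ℝ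
  nonneg : ∀ {f : Ξ → ℝ}, f ∈ domain → 0 ≤ f → 0 ≤ toLinearMap f

namespace DaniellFunctional

variable {Ξ : Type*} (𝓛 : DaniellFunctional Ξ)

/-- The extension of a Daniell functional to complex functions. -/
def complexify : (Ξ → ℂ) →ₗ[ℂ] ℂ :=
  Module.Dual.extendRCLike (𝓛.toLinearMap ∘ₗ Complex.reLm.compLeft Ξ)

theorem re_complexify (f : Ξ → ℂ) :
    (𝓛.complexify f).re = 𝓛.toLinearMap fun ξ => (f ξ).re :=
  Module.Dual.re_extendRCLike_apply (𝕜 := ℂ) _ f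

theorem im_complexify (f : Ξ → ℂ) :
    (𝓛.complexify f).im = 𝓛.toLinearMap fun ξ => (f ξ).im := by
  have him : (fun ξ => (f ξ).im) = -fun ξ => ((Complex.I • f) ξ).re := by ext; simp
  rw [him, map_neg]
  exact Module.Dual.im_extendRCLike_apply (𝕜 := ℂ) _ f

theorem complexify_conj (f : Ξ → ℂ) :
    𝓛.complexify (fun ξ => conj (f ξ)) = conj (𝓛.complexify f) := by
  have him : (fun ξ => (conj (f ξ)).im) = -fun ξ => (f ξ).im := by ext; simp
  apply Complex.ext
  · simp [re_complexify]
  · rw [im_complexify, him, map_neg, Complex.conj_im, im_complexify]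

theorem complexify_eq_of_re_eq {D : Type*} [AddCommGroup D] [Module ℂ D]
    {T : D →ₗ[ℂ] (Ξ → ℂ)} {F : D →ₗ[ℂ] ℂ}
    (h : ∀ d, 𝓛.toLinearMap (fun ξ => (T d ξ).re) = (F d).re) (d : D) :
    𝓛.complexify (T d) = F d := by
  suffices hTF : 𝓛.complexify ∘ₗ T = F from LinearMap.congr_fun hTF d
  refine Module.Dual.extendRCLikeₗ.symm.injective (LinearMap.ext fun d => ?_)
  exact (𝓛.re_complexify (T d)).trans (h d)

theorem mono {f g : Ξ → ℝ} (hf : f ∈ 𝓛.domain) (hg : g ∈ 𝓛.domain) (h : f ≤ g) :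
    𝓛.toLinearMap f ≤ 𝓛.toLinearMap g := by
  simpa using 𝓛.nonneg (sub_mem hg hf) (sub_nonneg.2 h)

section Existence

variable {κ : Type*} (q : κ → Ξ → ℝ)

/-- The ideal of functions dominated by a nonnegative combination of the functions `q k`. -/
def dominated : Submodule ℝ (Ξ → ℝ) where
  carrier := {f | ∃ c : κ →₀ ℝ≥0, |f| ≤ Finsupp.linearCombination ℝ≥0 q c}
  add_mem' := by
    rintro f g ⟨c, hc⟩ ⟨d, hd⟩
    exact ⟨c + d, by simpa using (abs_add_le f g).trans (add_le_add hc hd)⟩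
  zero_mem' := ⟨0, by simp⟩
  smul_mem' := by
    rintro r f ⟨c, hc⟩
    refine ⟨‖r‖₊ • c, fun ξ => ?_⟩
    simpa [NNReal.smul_def, abs_mul] using mul_le_mul_of_nonneg_left (hc ξ) (abs_nonneg r)

/-- The pairs `(f, t)` such that `f ≤ ∑ c k * q k` and `∑ c k * b k ≤ t` for some nonnegative
weights `c`: the epigraph of the smallest sublinear functional with value at most `b k` at
`q k` and at most zero at negative functions. -/
def majorantCone (b : κ → ℝ) : PointedCone ℝ (dominated q × ℝ) where
  carrier := {p | ∃ c : κ →₀ ℝ≥0, (p.1 : Ξ → ℝ) ≤ Finsupp.linearCombination ℝ≥0 q c ∧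
    Finsupp.linearCombination ℝ≥0 b c ≤ p.2}
  add_mem' := by
    rintro _ _ ⟨c, hc, hc'⟩ ⟨d, hd, hd'⟩
    exact ⟨c + d, by simpa using add_le_add hc hd, by simpa using add_le_add hc' hd'⟩
  zero_mem' := ⟨0, by simp, by simp⟩
  smul_mem' := by
    rintro r _ ⟨c, hc, hc'⟩
    have hr : ((r : ℝ).toNNReal : ℝ) = r := Real.coe_toNNReal _ r.2
    refine ⟨(r : ℝ).toNNReal • c, ?_, ?_⟩ <;> rw [map_smul, NNReal.smul_def, hr]
    · exact smul_le_smul_of_nonneg_left hc r.2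
    · exact smul_le_smul_of_nonneg_left hc' r.2

variable {q} {b : κ → ℝ} {D : Type*} [AddCommGroup D] [Module ℂ D]

theorem exists_forall_le_and_complexify_eq (hq : ∀ k, 0 ≤ q k)
    (T : D →ₗ[ℂ] (Ξ → ℂ)) (F : D →ₗ[ℂ] ℂ)
    (hT : ∀ d, (fun ξ => (T d ξ).re) ∈ dominated q)
    (hF : ∀ d (c : κ →₀ ℝ≥0), (∀ ξ, (T d ξ).re ≤ Finsupp.linearCombination ℝ≥0 q c ξ) →
      (F d).re ≤ Finsupp.linearCombination ℝ≥0 b c) :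
    ∃ 𝓛 : DaniellFunctional Ξ, (∀ k, q k ∈ 𝓛.domain ∧ 𝓛.toLinearMap (q k) ≤ b k) ∧
      ∀ d, 𝓛.complexify (T d) = F d := by
  have q_mem (k : κ) : q k ∈ dominated q :=
    ⟨Finsupp.single k 1, by simp [abs_of_nonneg (hq k)]⟩
  let reT : D →ₗ[ℝ] dominated q :=
    (Complex.reLm.compLeft Ξ ∘ₗ T.restrictScalars ℝ).codRestrict (dominated q) hT
  obtain ⟨L, hLT, hL⟩ := exists_linearMap_le_of_epigraph (majorantCone q b) reT
    (Complex.reLm ∘ₗ F.restrictScalars ℝ)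
    (fun ⟨_, c, hc⟩ => ⟨_, c, (le_abs_self _).trans hc, le_rfl⟩)
    (fun d t ⟨c, hc, hct⟩ => (hF d c hc).trans hct)
  obtain ⟨L', hL'⟩ := LinearMap.exists_extend L
  replace hL' {f : Ξ → ℝ} (hf : f ∈ dominated q) : L' f = L ⟨f, hf⟩ :=
    LinearMap.congr_fun hL' ⟨f, hf⟩
  let 𝓛 : DaniellFunctional Ξ :=
    { domain := dominated q
      mem_domain_of_abs_le := fun ⟨c, hc⟩ hfg => ⟨c, (hfg.trans (le_abs_self _)).trans hc⟩
      toLinearMap := L'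
      nonneg := fun {f} hf h0 => by
        have := hL (-⟨f, hf⟩) 0 ⟨0, by simpa using h0, by simp⟩
        rw [hL' hf]
        simpa using this }
  refine ⟨𝓛, fun k => ⟨q_mem k, ?_⟩, 𝓛.complexify_eq_of_re_eq fun d => ?_⟩
  · exact (hL' (q_mem k)).trans_le (hL _ _ ⟨Finsupp.single k 1, by simp, by simp⟩)
  · exact (hL' (hT d)).trans (LinearMap.congr_fun hLT d)

end Existence

end DaniellFunctional

section CompletionRep

open UniformSpace

variable {R E : Type*} [NonUnitalNonAssocSemiring R] [Module ℂ R] [Star R]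
  [SeminormedAddCommGroup E] [InnerProductSpace ℂ E]

theorem completion_clm_ext {F : Type*} [NormedAddCommGroup F] [NormedSpace ℂ F]
    {S T : Completion E →L[ℂ] F} (h : ∀ v : E, S v = T v) : S = T :=
  DFunLike.coe_injective (Completion.ext S.continuous T.continuous h)

/-- The *-representation on the completion of a pre-Hilbert space `E` induced by a representation
by bounded operators on `E` that respects formal adjoints. -/
def completionRep (π : R →ₙₐ[ℂ] (E →L[ℂ] E))
    (hπ : ∀ a v w, ⟪π (star a) v, w⟫_ℂ = ⟪v, π a w⟫_ℂ) :
    R →⋆ₙₐ[ℂ] (Completion E →L[ℂ] Completion E) where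
  toFun a := (π a).completion
  map_smul' _ _ := completion_clm_ext fun _ => by simp
  map_zero' := completion_clm_ext fun _ => by simp [Completion.coe_zero]
  map_add' _ _ := completion_clm_ext fun _ => by simp [Completion.coe_add]
  map_mul' _ _ := completion_clm_ext fun _ => by simp
  map_star' a := by
    refine (ContinuousLinearMap.eq_adjoint_iff _ _).2 fun v w => ?_
    induction v, w using Completion.induction_on₂ with
    | hp => exact isClosed_eq (by fun_prop) (by fun_prop)
    | ih v w => simp [hπ]

theorem completionRep_coe (π : R →ₙₐ[ℂ] (E →L[ℂ] E))
    (hπ : ∀ a v w, ⟪π (star a) v, w⟫_ℂ = ⟪v, π a w⟫_ℂ) (a : R) (v : E) :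
    completionRep π hπ a (v : Completion E) = (π a v : E) :=
  ContinuousLinearMap.completion_apply_coe (π a) v

end CompletionRep

namespace DaniellFunctional

open UniformSpace

variable {Ξ : Type*} (𝓛 : DaniellFunctional Ξ) (H : Type*) [NormedAddCommGroup H]
  [InnerProductSpace ℂ H]

/-- The `H`-valued functions that are square-integrable for `𝓛`. -/
def squareIntegrable : Submodule ℂ (Ξ → H) where
  carrier := {w | (fun ξ => ‖w ξ‖ ^ 2) ∈ 𝓛.domain}
  zero_mem' := 𝓛.mem_domain_of_abs_le (zero_mem _) fun ξ => by simp
  add_mem' {v w} hv hw := by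
    refine 𝓛.mem_domain_of_abs_le (𝓛.domain.smul_mem 2 (add_mem hv hw)) fun ξ => ?_
    have parallelogram := parallelogram_law_with_norm ℂ (v ξ) (w ξ)
    simp only [Pi.abs_apply, abs_sq, Pi.smul_apply, Pi.add_apply, smul_eq_mul]
    nlinarith [sq_nonneg ‖v ξ - w ξ‖]
  smul_mem' c w hw := by
    refine 𝓛.mem_domain_of_abs_le (𝓛.domain.smul_mem (‖c‖ ^ 2) hw) fun ξ => ?_
    simp [norm_smul, mul_pow]

/-- The space of square-integrable functions with the semi-inner product
`⟪v, w⟫ = 𝓛 (ξ ↦ ⟪v ξ, w ξ⟫)`. It is a type synonym, so as not to inherit the topology of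
pointwise convergence. -/
def PreL2 : Type _ := 𝓛.squareIntegrable H

namespace PreL2

instance : AddCommGroup (𝓛.PreL2 H) := inferInstanceAs (AddCommGroup (𝓛.squareIntegrable H))

instance : Module ℂ (𝓛.PreL2 H) := inferInstanceAs (Module ℂ (𝓛.squareIntegrable H))

variable {𝓛 H}

/-- The function underlying an element of `PreL2`. -/
def toFunₗ : 𝓛.PreL2 H →ₗ[ℂ] (Ξ → H) := (𝓛.squareIntegrable H).subtype

theorem toFunₗ_injective : Function.Injective (toFunₗ : 𝓛.PreL2 H → (Ξ → H)) :=
  Subtype.val_injective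

theorem norm_sq_mem_domain (w : 𝓛.PreL2 H) : (fun ξ => ‖toFunₗ w ξ‖ ^ 2) ∈ 𝓛.domain :=
  w.2

variable (𝓛 H) in
/-- The semi-inner product of `PreL2`. -/
abbrev innerCore : PreInnerProductSpace.Core ℂ (𝓛.PreL2 H) where
  inner v w := 𝓛.complexify fun ξ => ⟪toFunₗ v ξ, toFunₗ w ξ⟫_ℂ
  conj_inner_symm v w := by
    rw [← complexify_conj]
    simp only [inner_conj_symm]
  re_inner_nonneg w := by
    rw [RCLike.re_to_complex, re_complexify]
    refine 𝓛.nonneg ?_ fun ξ => inner_self_nonneg (𝕜 := ℂ)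
    simpa only [← inner_self_eq_norm_sq (𝕜 := ℂ)] using! w.norm_sq_mem_domain
  add_left u v w := by
    rw [← map_add]
    congr 1 with ξ
    simp
  smul_left v w c := by
    rw [← smul_eq_mul, ← map_smul]
    congr 1 with ξ
    simp [mul_comm]

instance : SeminormedAddCommGroup (𝓛.PreL2 H) :=
  InnerProductSpace.Core.toSeminormedAddCommGroup (c := innerCore 𝓛 H)

instance : InnerProductSpace ℂ (𝓛.PreL2 H) := InnerProductSpace.ofCore (innerCore 𝓛 H)

theorem inner_def (v w : 𝓛.PreL2 H) :
    ⟪v, w⟫_ℂ = 𝓛.complexify fun ξ => ⟪toFunₗ v ξ, toFunₗ w ξ⟫_ℂ := rfl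

theorem norm_sq_eq (w : 𝓛.PreL2 H) :
    ‖w‖ ^ 2 = 𝓛.toLinearMap fun ξ => ‖toFunₗ w ξ‖ ^ 2 := by
  simp only [← inner_self_eq_norm_sq (𝕜 := ℂ), inner_def, RCLike.re_to_complex, re_complexify]

/-- The pointwise action of a bounded operator on square-integrable functions. -/
def mapₗ (T : H →L[ℂ] H) : 𝓛.PreL2 H →ₗ[ℂ] 𝓛.PreL2 H :=
  ((T : H →ₗ[ℂ] H).compLeft Ξ).restrict (p := 𝓛.squareIntegrable H) (q := 𝓛.squareIntegrable H)
    fun w hw => by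
      refine 𝓛.mem_domain_of_abs_le (𝓛.domain.smul_mem (‖T‖ ^ 2) hw) fun ξ => ?_
      simpa [mul_pow] using pow_le_pow_left₀ (norm_nonneg _) (T.le_opNorm (w ξ)) 2

theorem toFunₗ_mapₗ (T : H →L[ℂ] H) (w : 𝓛.PreL2 H) (ξ : Ξ) :
    toFunₗ (mapₗ T w) ξ = T (toFunₗ w ξ) := rfl

theorem norm_mapₗ_le (T : H →L[ℂ] H) (w : 𝓛.PreL2 H) : ‖mapₗ T w‖ ≤ ‖T‖ * ‖w‖ := by
  refine le_of_sq_le_sq ?_ (by positivity)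
  rw [mul_pow, norm_sq_eq, norm_sq_eq, ← smul_eq_mul, ← map_smul]
  refine 𝓛.mono (norm_sq_mem_domain _) (𝓛.domain.smul_mem _ (norm_sq_mem_domain w)) fun ξ => ?_
  simpa [mul_pow, toFunₗ_mapₗ] using
    pow_le_pow_left₀ (norm_nonneg _) (T.le_opNorm (toFunₗ w ξ)) 2

variable (𝓛 H) in
/-- The representation of `B(H)` on `PreL2` by pointwise action. -/
def pointwiseAction : (H →L[ℂ] H) →ₙₐ[ℂ] (𝓛.PreL2 H →L[ℂ] 𝓛.PreL2 H) where
  toFun T := (mapₗ T).mkContinuous ‖T‖ (norm_mapₗ_le T)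
  map_smul' _ _ := ContinuousLinearMap.ext fun _ => toFunₗ_injective rfl
  map_zero' := ContinuousLinearMap.ext fun _ => toFunₗ_injective rfl
  map_add' _ _ := ContinuousLinearMap.ext fun _ => toFunₗ_injective rfl
  map_mul' _ _ := ContinuousLinearMap.ext fun _ => toFunₗ_injective rfl

theorem toFunₗ_pointwiseAction (T : H →L[ℂ] H) (w : 𝓛.PreL2 H) (ξ : Ξ) :
    toFunₗ (pointwiseAction 𝓛 H T w) ξ = T (toFunₗ w ξ) := rfl

end PreL2

/-- The Hilbert space of square-integrable functions. -/
abbrev L2 : Type _ := Completion (𝓛.PreL2 H)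

variable {H}

/-- The *-representation of `B(H)` on `L2` by pointwise action. -/
def pointwiseRep [CompleteSpace H] : (H →L[ℂ] H) →⋆ₙₐ[ℂ] (𝓛.L2 H →L[ℂ] 𝓛.L2 H) :=
  completionRep (PreL2.pointwiseAction 𝓛 H) fun T v w => by
    simp only [PreL2.inner_def, PreL2.toFunₗ_pointwiseAction, ContinuousLinearMap.star_eq_adjoint,
      ContinuousLinearMap.adjoint_inner_left]

section ToL2

variable {G : Type*} [NormedAddCommGroup G] [InnerProductSpace ℂ G]

/-- The operators `f ξ` are bounded by `√C` in mean square. -/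
def IsSquareBounded (f : Ξ → G →ₗ[ℂ] H) (C : ℝ) : Prop :=
  ∀ h, (fun ξ => ‖f ξ h‖ ^ 2) ∈ 𝓛.domain ∧ 𝓛.toLinearMap (fun ξ => ‖f ξ h‖ ^ 2) ≤ C * ‖h‖ ^ 2

namespace IsSquareBounded

variable {𝓛} {f g : Ξ → G →ₗ[ℂ] H} {C : ℝ}

/-- The map `h ↦ (ξ ↦ f ξ h)` into the square-integrable functions. -/
def toPreL2ₗ (hf : 𝓛.IsSquareBounded f C) : G →ₗ[ℂ] 𝓛.PreL2 H :=
  (LinearMap.pi f).codRestrict (𝓛.squareIntegrable H) fun h => (hf h).1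

theorem norm_toPreL2ₗ_le (hf : 𝓛.IsSquareBounded f C) (h : G) :
    ‖hf.toPreL2ₗ h‖ ≤ √C * ‖h‖ := by
  rw [← Real.sqrt_sq (norm_nonneg h), ← Real.sqrt_mul' C (sq_nonneg _)]
  exact Real.le_sqrt_of_sq_le ((PreL2.norm_sq_eq _).trans_le (hf h).2)

/-- The operator `h ↦ (ξ ↦ f ξ h)` into `L2`. -/
def toL2 (hf : 𝓛.IsSquareBounded f C) : G →L[ℂ] 𝓛.L2 H :=
  Completion.toComplL ∘L hf.toPreL2ₗ.mkContinuous √C hf.norm_toPreL2ₗ_le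

theorem norm_toL2_le (hf : 𝓛.IsSquareBounded f C) : ‖hf.toL2‖ ≤ √C :=
  ContinuousLinearMap.opNorm_le_bound _ (Real.sqrt_nonneg C) fun h =>
    (Completion.norm_coe _).trans_le (hf.norm_toPreL2ₗ_le h)

theorem inner_toL2_pointwiseRep [CompleteSpace H] (hf : 𝓛.IsSquareBounded f C)
    (hg : 𝓛.IsSquareBounded g C) (T : H →L[ℂ] H) (h k : G) :
    ⟪hf.toL2 h, 𝓛.pointwiseRep T (hg.toL2 k)⟫_ℂ =
      𝓛.complexify fun ξ => ⟪f ξ h, T (g ξ k)⟫_ℂ :=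
  (congrArg _ (completionRep_coe _ _ T _)).trans (Completion.inner_coe _ _)

end IsSquareBounded

end ToL2

end DaniellFunctional

section EssentialSubspace

variable {A K : Type*} [NonUnitalCStarAlgebra A] [NormedAddCommGroup K] [InnerProductSpace ℂ K]
  [CompleteSpace K] (ρ : A →⋆ₙₐ[ℂ] (K →L[ℂ] K))

theorem inner_map_star_left (a : A) (v w : K) : ⟪ρ (star a) v, w⟫_ℂ = ⟪v, ρ a w⟫_ℂ := by
  rw [map_star, ContinuousLinearMap.star_eq_adjoint, ContinuousLinearMap.adjoint_inner_left]

/-- The essential subspace of a *-representation: the closed span of the ranges of its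
operators. -/
def essentialSubspace : Submodule ℂ K :=
  (Submodule.span ℂ {ξ : K | ∃ (a : A) (v : K), ρ a v = ξ}).topologicalClosure

instance : CompleteSpace (essentialSubspace ρ) :=
  (Submodule.isClosed_topologicalClosure _).completeSpace_coe

theorem apply_mem_essentialSubspace (a : A) (v : K) : ρ a v ∈ essentialSubspace ρ :=
  Submodule.le_topologicalClosure _ (Submodule.subset_span ⟨a, v, rfl⟩)

theorem mem_essentialSubspace_orthogonal_iff {v : K} :
    v ∈ (essentialSubspace ρ)ᗮ ↔ ∀ a, ρ a v = 0 := by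
  constructor
  · intro hv a
    refine ext_inner_left ℂ fun w => ?_
    rw [← inner_map_star_left, inner_zero_right]
    exact hv _ (apply_mem_essentialSubspace ρ _ _)
  · intro hv
    have span_le : Submodule.span ℂ {ξ : K | ∃ (a : A) (v : K), ρ a v = ξ} ≤ (ℂ ∙ v)ᗮ := by
      rw [Submodule.span_le]
      rintro _ ⟨a, w, rfl⟩
      rw [SetLike.mem_coe, Submodule.mem_orthogonal_singleton_iff_inner_left, ← star_star a,
        inner_map_star_left, hv, inner_zero_right]
    rw [essentialSubspace, Submodule.orthogonal_closure]
    exact fun w hw => Submodule.mem_orthogonal_singleton_iff_inner_left.1 (span_le hw)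

theorem nondegenerateRep_iff : NondegenerateRep ρ ↔ ∀ v, (∀ a, ρ a v = 0) → v = 0 := by
  simp only [NondegenerateRep, Submodule.dense_iff_topologicalClosure_eq_top,
    Submodule.topologicalClosure_eq_top_iff, ← mem_essentialSubspace_orthogonal_iff,
    ← Submodule.eq_bot_iff, essentialSubspace, Submodule.orthogonal_closure]

/-- The projection onto the essential subspace. -/
abbrev essentialProjection : K →L[ℂ] essentialSubspace ρ :=
  (essentialSubspace ρ).orthogonalProjectionOnto

theorem apply_essentialProjection (a : A) (v : K) : ρ a (essentialProjection ρ v) = ρ a v := by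
  have h := (mem_essentialSubspace_orthogonal_iff ρ).1
    ((essentialSubspace ρ).sub_starProjection_mem_orthogonal v) a
  rw [map_sub, sub_eq_zero] at h
  exact h.symm

/-- The restriction of a *-representation to its essential subspace. -/
def essentialRep : A →⋆ₙₐ[ℂ] (essentialSubspace ρ →L[ℂ] essentialSubspace ρ) where
  toFun a := ((ρ a) ∘L (essentialSubspace ρ).subtypeL).codRestrict _
    fun v => apply_mem_essentialSubspace ρ a v
  map_smul' c a := by ext v; exact DFunLike.congr_fun (map_smul ρ c a) (v : K)
  map_zero' := by ext v; exact DFunLike.congr_fun (map_zero ρ) (v : K)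
  map_add' a b := by ext v; exact DFunLike.congr_fun (map_add ρ a b) (v : K)
  map_mul' a b := by ext v; exact DFunLike.congr_fun (map_mul ρ a b) (v : K)
  map_star' a := (ContinuousLinearMap.eq_adjoint_iff _ _).2 fun v w =>
    inner_map_star_left ρ a v w

theorem coe_essentialRep_apply (a : A) (v : essentialSubspace ρ) :
    (essentialRep ρ a v : K) = ρ a v := rfl

theorem nondegenerateRep_essentialRep : NondegenerateRep (essentialRep ρ) := by
  rw [nondegenerateRep_iff]
  intro v hv
  have hv' : (v : K) ∈ (essentialSubspace ρ)ᗮ :=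
    (mem_essentialSubspace_orthogonal_iff ρ).2 fun a => congrArg Subtype.val (hv a)
  exact Subtype.ext (inner_self_eq_zero.1 (hv' v v.2))

theorem inner_essentialProjection_essentialRep (a : A) (v w : K) :
    ⟪essentialProjection ρ v, essentialRep ρ a (essentialProjection ρ w)⟫_ℂ = ⟪v, ρ a w⟫_ℂ := by
  rw [Submodule.inner_orthogonalProjectionOnto_eq_of_mem_right, coe_essentialRep_apply,
    apply_essentialProjection]

end EssentialSubspace

section InnerTransfer

variable {𝕜 E F E' F' : Type*} [RCLike 𝕜]
  [NormedAddCommGroup E] [InnerProductSpace 𝕜 E] [NormedAddCommGroup F] [InnerProductSpace 𝕜 F]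
  [NormedAddCommGroup E'] [InnerProductSpace 𝕜 E'] [NormedAddCommGroup F'] [InnerProductSpace 𝕜 F']

theorem opNorm_le_of_inner_eq_inner {T : E →L[𝕜] F} {T' : E' →L[𝕜] F'} {S : F → F'} {R : E → E'}
    {s r : ℝ} (hs : 0 ≤ s) (hr : 0 ≤ r) (hS : ∀ w, ‖S w‖ ≤ s * ‖w‖) (hR : ∀ v, ‖R v‖ ≤ r * ‖v‖)
    (h : ∀ w v, inner 𝕜 w (T v) = inner 𝕜 (S w) (T' (R v))) : ‖T‖ ≤ s * r * ‖T'‖ := by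
  refine T.opNorm_le_of_re_inner_le (by positivity) fun v w hv hw => ?_
  calc RCLike.re (inner 𝕜 (T v) w) = RCLike.re (inner 𝕜 w (T v)) := inner_re_symm _ _
    _ ≤ ‖inner 𝕜 w (T v)‖ := RCLike.re_le_norm _
    _ = ‖inner 𝕜 (S w) (T' (R v))‖ := by rw [h]
    _ ≤ ‖S w‖ * (‖T'‖ * ‖R v‖) := by grw [norm_inner_le_norm, T'.le_opNorm]
    _ ≤ (s * ‖w‖) * (‖T'‖ * (r * ‖v‖)) := by grw [hS, hR]
    _ = s * r * ‖T'‖ := by rw [hv, hw]; ring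

theorem opNorm_le_two_of_re_inner_le_add_sq {T : E →L[𝕜] F}
    (h : ∀ w v, RCLike.re (inner 𝕜 w (T v)) ≤ ‖w‖ ^ 2 + ‖v‖ ^ 2) : ‖T‖ ≤ 2 := by
  refine T.opNorm_le_of_re_inner_le zero_le_two fun v w hv hw => ?_
  rw [inner_re_symm]
  exact (h w v).trans_eq (by rw [hv, hw]; norm_num)

end InnerTransfer

theorem norm_toLp_comp_le {ν : Type*} [Fintype ν] {E F : Type*} [SeminormedAddCommGroup E]
    [SeminormedAddCommGroup F] (f : ν → E → F) {c : ℝ} (hc : 0 ≤ c)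
    (hf : ∀ i e, ‖f i e‖ ≤ c * ‖e‖) (w : PiLp 2 fun _ : ν => E) :
    ‖(WithLp.toLp 2 fun i => f i (w i) : PiLp 2 fun _ : ν => F)‖ ≤ c * ‖w‖ := by
  refine (sq_le_sq₀ (norm_nonneg _) (by positivity)).mp ?_
  rw [mul_pow, PiLp.norm_sq_eq_of_L2, PiLp.norm_sq_eq_of_L2, Finset.mul_sum]
  refine Finset.sum_le_sum fun i _ => ?_
  rw [← mul_pow]
  exact pow_le_pow_left₀ (norm_nonneg _) (hf i (w i)) 2

section MatOp

variable {ν μ : Type*} [Fintype ν] [Fintype μ]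
  {H : Type*} [NormedAddCommGroup H] [InnerProductSpace ℂ H]
  {K : Type*} [NormedAddCommGroup K] [InnerProductSpace ℂ K]

theorem matOp_apply (M : Matrix ν ν (H →L[ℂ] H)) (v : PiLp 2 fun _ : ν => H) (i : ν) :
    matOp M v i = ∑ j, M i j (v j) := by
  simp [matOp]

theorem inner_matOp (M : Matrix ν ν (H →L[ℂ] H)) (w v : PiLp 2 fun _ : ν => H) :
    ⟪w, matOp M v⟫_ℂ = ∑ i, ∑ j, ⟪w i, M i j (v j)⟫_ℂ := by
  simp [PiLp.inner_apply, matOp_apply, inner_sum]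

theorem norm_matOp_submatrix_equiv_le (e : μ ≃ ν) (M : Matrix ν ν (H →L[ℂ] H)) :
    ‖matOp (M.submatrix e e)‖ ≤ ‖matOp M‖ := by
  let reindex := LinearIsometryEquiv.piLpCongrLeft 2 ℂ H e
  have hreindex (w : PiLp 2 fun _ : μ => H) : ‖reindex w‖ ≤ 1 * ‖w‖ := by
    rw [reindex.norm_map, one_mul]
  have hinner (w v) : ⟪w, matOp (M.submatrix e e) v⟫_ℂ = ⟪reindex w, matOp M (reindex v)⟫_ℂ := by
    simp only [inner_matOp]
    refine Fintype.sum_equiv e _ _ fun i => Fintype.sum_equiv e _ _ fun j => ?_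
    simp [reindex]
  simpa using opNorm_le_of_inner_eq_inner zero_le_one zero_le_one hreindex hreindex hinner

theorem norm_matOp_submatrix_equiv (e : μ ≃ ν) (M : Matrix ν ν (H →L[ℂ] H)) :
    ‖matOp (M.submatrix e e)‖ = ‖matOp M‖ := by
  refine (norm_matOp_submatrix_equiv_le e M).antisymm ?_
  simpa using norm_matOp_submatrix_equiv_le e.symm (M.submatrix e e)

theorem matOp_zero : matOp (0 : Matrix ν ν (H →L[ℂ] H)) = 0 := by
  ext v i
  simp [matOp_apply]

theorem matOp_add (M N : Matrix ν ν (H →L[ℂ] H)) : matOp (M + N) = matOp M + matOp N := by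
  ext v i
  simp [matOp_apply, Finset.sum_add_distrib]

theorem matOp_smul (c : ℂ) (M : Matrix ν ν (H →L[ℂ] H)) : matOp (c • M) = c • matOp M := by
  ext v i
  simp [matOp_apply, Finset.smul_sum]

theorem matOp_mul (M N : Matrix ν ν (H →L[ℂ] H)) : matOp (M * N) = matOp M * matOp N := by
  ext v i
  simp only [matOp_apply, Matrix.mul_apply, mul_apply_eq_comp, _root_.sum_apply,
    map_sum]
  exact Finset.sum_comm

theorem matOp_conjTranspose [CompleteSpace H] (M : Matrix ν ν (H →L[ℂ] H)) :
    matOp Mᴴ = star (matOp M) := by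
  refine (ContinuousLinearMap.eq_adjoint_iff _ _).mpr fun v w => ?_
  rw [inner_matOp, ← inner_conj_symm, inner_matOp]
  simp only [Matrix.conjTranspose_apply, ContinuousLinearMap.star_eq_adjoint, map_sum,
    inner_conj_symm, ContinuousLinearMap.adjoint_inner_left]
  exact Finset.sum_comm

theorem matOp_injective : Function.Injective (matOp : Matrix ν ν (H →L[ℂ] H) → _) := by
  classical
  intro M N h
  ext i j v
  simpa [matOp_apply, Pi.single_apply, apply_ite] using
    congrArg (fun T => T (WithLp.toLp 2 (Pi.single j v)) i) h

variable {A : Type*} [NonUnitalCStarAlgebra A] [CompleteSpace H] [CompleteSpace K]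

/-- The amplification `(a i j) ↦ (ρ (a i j))` of a *-representation of `A` on `K` to a
*-representation of the matrix algebra over `A` on `K ⊕₂ ⋯ ⊕₂ K`. -/
def ampRep (ν : Type*) [Fintype ν] (ρ : A →⋆ₙₐ[ℂ] (K →L[ℂ] K)) :
    CStarMatrix ν ν A →⋆ₙₐ[ℂ] (PiLp 2 (fun _ : ν => K) →L[ℂ] PiLp 2 (fun _ : ν => K)) where
  toFun M := matOp (Matrix.map (CStarMatrix.ofMatrix.symm M) ρ)
  map_smul' c M := by rw [← matOp_smul]; congr 1; ext i j; simp
  map_zero' := by rw [← matOp_zero]; congr 1; ext i j; simp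
  map_add' M N := by rw [← matOp_add]; congr 1; ext i j; simp
  map_mul' M N := by
    rw [← matOp_mul]; congr 1; ext i j; simp [Matrix.mul_apply, CStarMatrix.mul_apply]
  map_star' M := by
    rw [← matOp_conjTranspose]; congr 1; ext i j; simp [CStarMatrix.star_apply, map_star ρ]

theorem ampRep_injective {ρ : A →⋆ₙₐ[ℂ] (K →L[ℂ] K)} (hρ : Function.Injective ρ) :
    Function.Injective (ampRep ν ρ) :=
  matOp_injective.comp <| (Matrix.map_injective hρ).comp CStarMatrix.ofMatrix.symm.injective

theorem norm_matOp_map_le {ι : A →⋆ₙₐ[ℂ] (H →L[ℂ] H)} (hι : Function.Injective ι)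
    (ρ : A →⋆ₙₐ[ℂ] (K →L[ℂ] K)) (M : Matrix ν ν A) :
    ‖matOp (M.map ρ)‖ ≤ ‖matOp (M.map ι)‖ := by
  let _ := CStarAlgebra.spectralOrder A
  have := CStarAlgebra.spectralOrderedRing A
  calc ‖ampRep ν ρ (CStarMatrix.ofMatrix M)‖ ≤ ‖CStarMatrix.ofMatrix M‖ :=
        NonUnitalStarAlgHom.norm_apply_le (ampRep ν ρ) _
    _ = ‖ampRep ν ι (CStarMatrix.ofMatrix M)‖ :=
        (NonUnitalStarAlgHom.norm_map (ampRep ν ι) (ampRep_injective hι) _).symm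

end MatOp

section TOp

variable {X H ν : Type*} [NormedAddCommGroup H] {F : Finset X}

/-- Restriction of an `n`-tuple of vectors of `ℓ²(X, H)` to the finite subset `F` of `X`. -/
def restrictTuple (F : Finset X) (w : PiLp 2 fun _ : ν => lp (fun _ : X => H) 2) :
    PiLp 2 fun _ : ν × F => H :=
  WithLp.toLp 2 fun p => w p.1 p.2

theorem norm_restrictTuple_le [Fintype ν] (w : PiLp 2 fun _ : ν => lp (fun _ : X => H) 2) :
    ‖restrictTuple F w‖ ≤ ‖w‖ := by
  refine (sq_le_sq₀ (norm_nonneg _) (norm_nonneg _)).mp ?_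
  rw [PiLp.norm_sq_eq_of_L2, PiLp.norm_sq_eq_of_L2, Fintype.sum_prod_type]
  refine Finset.sum_le_sum fun i _ => ?_
  have := lp.sum_rpow_le_norm_rpow (by norm_num) (w i) F
  rw [← Finset.sum_coe_sort F] at this
  simpa [restrictTuple] using this

variable [InnerProductSpace ℂ H]

theorem lpSingle_apply_self (x : X) (h : H) : (lpSingle x h : lp (fun _ : X => H) 2) x = h := by
  simp [lpSingle]

theorem norm_lpSingle (x : X) (h : H) : ‖(lpSingle x h : lp (fun _ : X => H) 2)‖ = ‖h‖ := by
  classical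
  exact lp.norm_single (p := 2) (E := fun _ : X => H) (by norm_num) x h

theorem inner_lpSingle (x : X) (h : H) (f : lp (fun _ : X => H) 2) :
    ⟪lpSingle x h, f⟫_ℂ = ⟪h, f x⟫_ℂ := by
  classical
  exact lp.inner_single_left (𝕜 := ℂ) (G := fun _ : X => H) x h f

theorem inner_elemOp (f g : lp (fun _ : X => H) 2) (x y : X) (T : H →L[ℂ] H) :
    ⟪f, elemOp x y T g⟫_ℂ = ⟪f x, T (g y)⟫_ℂ := by
  classical
  exact lp.inner_single_right (𝕜 := ℂ) (G := fun _ : X => H) x (T (g y)) f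

theorem TOp_eq_sum {k : X × X → (H →L[ℂ] H)} {s : Finset (X × X)}
    (hs : Function.support k ⊆ s) : TOp k = ∑ p ∈ s, elemOp p.1 p.2 (k p) := by
  refine finsum_eq_sum_of_support_subset _ fun p hp => hs fun hk => hp ?_
  simp [hk, elemOp]

theorem TOp_map_single {M : Type*} [Zero M] [DecidableEq X] {ψ : X × X → M → (H →L[ℂ] H)}
    (hψ : ∀ p, ψ p 0 = 0) (x y : X) (m : M) :
    TOp (fun p => ψ p ((Pi.single (x, y) m : X × X → M) p)) = elemOp x y (ψ (x, y) m) := by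
  rw [TOp_eq_sum (s := {(x, y)})]
  · simp
  · intro p hp
    by_contra hne
    exact hp (by simp [Pi.single_eq_of_ne (show p ≠ (x, y) by simpa using hne), hψ])

theorem inner_TOp {k : X × X → (H →L[ℂ] H)} {F : Finset X}
    (hk : Function.support k ⊆ (F ×ˢ F : Finset (X × X))) (f g : lp (fun _ : X => H) 2) :
    ⟪f, TOp k g⟫_ℂ = ∑ x : F, ∑ y : F, ⟪f x, k (x, y) (g y)⟫_ℂ := by
  simp only [TOp_eq_sum hk, _root_.sum_apply, inner_sum, inner_elemOp, Finset.sum_product,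
    ← Finset.sum_coe_sort F]

theorem norm_matOp_elemOp [Fintype ν] (x y : ν → X) (M : Matrix ν ν (H →L[ℂ] H)) :
    ‖matOp (Matrix.of fun i j => elemOp (x i) (y j) (M i j))‖ = ‖matOp M‖ := by
  refine le_antisymm ?_ ?_
  · have heval (z : ν → X) (i : ν) (f : lp (fun _ : X => H) 2) : ‖f (z i)‖ ≤ 1 * ‖f‖ := by
      simpa using lp.norm_apply_le_norm (by norm_num) f (z i)
    simpa using opNorm_le_of_inner_eq_inner (T' := matOp M) zero_le_one zero_le_one
      (norm_toLp_comp_le _ zero_le_one (heval x)) (norm_toLp_comp_le _ zero_le_one (heval y))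
      fun w v => by simp [inner_matOp, inner_elemOp]
  · have hsingle (z : ν → X) (i : ν) (h : H) :
        ‖(lpSingle (z i) h : lp (fun _ : X => H) 2)‖ ≤ 1 * ‖h‖ := by rw [norm_lpSingle, one_mul]
    simpa using opNorm_le_of_inner_eq_inner (T := matOp M) zero_le_one zero_le_one
      (norm_toLp_comp_le _ zero_le_one (hsingle x)) (norm_toLp_comp_le _ zero_le_one (hsingle y))
      fun w v => by simp [inner_matOp, inner_elemOp, lpSingle_apply_self]

/-- Extension by zero of an `n`-tuple of `H`-valued functions on the finite subset `F` of `X`. -/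
def extendTuple (F : Finset X) (w : PiLp 2 fun _ : ν × F => H) :
    PiLp 2 fun _ : ν => lp (fun _ : X => H) 2 :=
  WithLp.toLp 2 fun i => ∑ x : F, lpSingle (x : X) (w (i, x))

theorem restrictTuple_extendTuple (w : PiLp 2 fun _ : ν × F => H) :
    restrictTuple F (extendTuple F w) = w := by
  classical
  ext ⟨i, x⟩
  simp only [restrictTuple, extendTuple, lpSingle, LinearMap.mkContinuous_apply,
    LinearMap.coe_mk, AddHom.coe_mk, lp.coeFn_sum, lp.coeFn_single, Finset.sum_apply]
  rw [Finset.sum_eq_single x (fun y _ hy => Pi.single_eq_of_ne (by simpa using hy.symm) _)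
    (by simp), Pi.single_eq_same]

variable [Fintype ν]

theorem inner_extendTuple (w : PiLp 2 fun _ : ν × F => H)
    (u : PiLp 2 fun _ : ν => lp (fun _ : X => H) 2) :
    ⟪extendTuple F w, u⟫_ℂ = ⟪w, restrictTuple F u⟫_ℂ := by
  simp [PiLp.inner_apply, extendTuple, restrictTuple, sum_inner, inner_lpSingle,
    Fintype.sum_prod_type]

theorem norm_extendTuple (w : PiLp 2 fun _ : ν × F => H) : ‖extendTuple F w‖ = ‖w‖ := by
  rw [norm_eq_sqrt_re_inner (𝕜 := ℂ), norm_eq_sqrt_re_inner (𝕜 := ℂ) w, inner_extendTuple,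
    restrictTuple_extendTuple]

theorem norm_matOp_TOp {k : ν → ν → X × X → (H →L[ℂ] H)}
    (hk : ∀ i j, Function.support (k i j) ⊆ (F ×ˢ F : Finset (X × X))) :
    ‖matOp (Matrix.of fun i j => TOp (k i j))‖ =
      ‖matOp (Matrix.of fun p q : ν × F => k p.1 q.1 (p.2, q.2))‖ := by
  have hinner (w v) : ⟪w, matOp (Matrix.of fun i j => TOp (k i j)) v⟫_ℂ =
      ⟪restrictTuple F w, matOp (Matrix.of fun p q : ν × F => k p.1 q.1 (p.2, q.2))
        (restrictTuple F v)⟫_ℂ := by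
    simp only [inner_matOp, Matrix.of_apply, inner_TOp (hk _ _), Fintype.sum_prod_type,
      restrictTuple]
    exact Finset.sum_congr rfl fun i _ => Finset.sum_comm
  refine le_antisymm ?_ ?_
  · simpa using opNorm_le_of_inner_eq_inner zero_le_one zero_le_one
      (fun w => (norm_restrictTuple_le w).trans_eq (one_mul _).symm)
      (fun v => (norm_restrictTuple_le v).trans_eq (one_mul _).symm) hinner
  · simpa using opNorm_le_of_inner_eq_inner zero_le_one zero_le_one
      (fun w => (norm_extendTuple w).le.trans_eq (one_mul _).symm)
      (fun v => (norm_extendTuple v).le.trans_eq (one_mul _).symm)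
      fun w v => by rw [hinner, restrictTuple_extendTuple, restrictTuple_extendTuple]

end TOp

section SchurBound

variable {X H A : Type*} [NormedAddCommGroup H] [InnerProductSpace ℂ H] [CompleteSpace H]
  [NonUnitalCStarAlgebra A] {ι : A →⋆ₙₐ[ℂ] (H →L[ℂ] H)} {φ : X → X → (A →ₗ[ℂ] (H →L[ℂ] H))}
  {C : ℝ}

theorem SchurBound.norm_matOp_fin_le (hφ : SchurBound ι φ C) {n : ℕ} (x y : Fin n → X)
    (α : Matrix (Fin n) (Fin n) A) :
    ‖matOp (Matrix.of fun i j => φ (x i) (y j) (α i j))‖ ≤ C * ‖matOp (α.map ι)‖ := by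
  classical
  have h := hφ n (fun i j => Pi.single (x i, y j) (α i j)) fun i j =>
    (Set.finite_singleton _).subset Pi.support_single_subset
  simp only [TKer, TOp_map_single (ψ := fun p => φ p.1 p.2) fun _ => map_zero _,
    TOp_map_single (ψ := fun _ => ι) fun _ => map_zero _] at h
  exact (norm_matOp_elemOp x y (Matrix.of fun i j => φ (x i) (y j) (α i j))).symm.trans_le <|
    h.trans_eq (congrArg (C * ·) (norm_matOp_elemOp x y (α.map ι)))

theorem SchurBound.norm_matOp_le (hφ : SchurBound ι φ C) {ν : Type*} [Fintype ν] (x y : ν → X)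
    (α : Matrix ν ν A) :
    ‖matOp (Matrix.of fun i j => φ (x i) (y j) (α i j))‖ ≤ C * ‖matOp (α.map ι)‖ := by
  let e := (Fintype.equivFin ν).symm
  have h := hφ.norm_matOp_fin_le (x ∘ e) (y ∘ e) (α.submatrix e e)
  rwa [← norm_matOp_submatrix_equiv e, ← norm_matOp_submatrix_equiv e (α.map ι)]

theorem exists_finset_support_subset_prod {ν M : Type*} [Finite ν] [Zero M]
    {k : ν → X × X → M} (hk : ∀ i, (Function.support (k i)).Finite) :
    ∃ F : Finset X, ∀ i, Function.support (k i) ⊆ (F ×ˢ F : Finset (X × X)) := by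
  classical
  let S : Finset (X × X) := (Set.finite_iUnion hk).toFinset
  refine ⟨S.image Prod.fst ∪ S.image Prod.snd, fun i p hp => ?_⟩
  have hpS : p ∈ S := (Set.finite_iUnion hk).mem_toFinset.mpr (Set.mem_iUnion_of_mem i hp)
  exact Finset.mem_product.mpr ⟨Finset.mem_union_left _ (Finset.mem_image_of_mem _ hpS),
    Finset.mem_union_right _ (Finset.mem_image_of_mem _ hpS)⟩

theorem norm_matOp_adjoint_comp_le {K : Type*} [NormedAddCommGroup K] [InnerProductSpace ℂ K]
    [CompleteSpace K] {ν : Type*} [Fintype ν] {V W : ν → (H →L[ℂ] K)} {c d : ℝ} (hc : 0 ≤ c)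
    (hd : 0 ≤ d) (hV : ∀ i, ‖V i‖ ≤ c) (hW : ∀ i, ‖W i‖ ≤ d) (M : Matrix ν ν (K →L[ℂ] K)) :
    ‖matOp (Matrix.of fun i j => ContinuousLinearMap.adjoint (V i) ∘L M i j ∘L W j)‖ ≤
      c * d * ‖matOp M‖ :=
  opNorm_le_of_inner_eq_inner hc hd
    (norm_toLp_comp_le _ hc fun i => (V i).le_of_opNorm_le (hV i))
    (norm_toLp_comp_le _ hd fun j => (W j).le_of_opNorm_le (hW j))
    fun w v => by simp [inner_matOp, ContinuousLinearMap.adjoint_inner_right]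

theorem schurBound_of_adjoint_comp {K : Type*} [NormedAddCommGroup K] [InnerProductSpace ℂ K]
    [CompleteSpace K] (hι : Function.Injective ι) {ρ : A →⋆ₙₐ[ℂ] (K →L[ℂ] K)}
    {V W : X → (H →L[ℂ] K)} {c d : ℝ} (hc : 0 ≤ c) (hd : 0 ≤ d) (hV : ∀ x, ‖V x‖ ≤ c)
    (hW : ∀ y, ‖W y‖ ≤ d)
    (hφ : ∀ x y a, φ x y a = ContinuousLinearMap.adjoint (V x) ∘L ρ a ∘L W y) :
    SchurBound ι φ (c * d) := by
  intro n k hk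
  obtain ⟨F, hF⟩ := exists_finset_support_subset_prod (k := Function.uncurry k) fun i => hk i.1 i.2
  have hsupp (ψ : X × X → A → (H →L[ℂ] H)) (hψ : ∀ p, ψ p 0 = 0) (i j : Fin n) :
      Function.support (fun p => ψ p (k i j p)) ⊆ (F ×ˢ F : Finset (X × X)) :=
    fun p hp => hF (i, j) fun hkp => hp (by simp_all [Function.uncurry])
  let α : Matrix (Fin n × F) (Fin n × F) A := Matrix.of fun p q => k p.1 q.1 (p.2, q.2)
  calc ‖matOp (Matrix.of fun i j => TOp fun p => φ p.1 p.2 (k i j p))‖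
      = ‖matOp (Matrix.of fun p q => φ p.2 q.2 (α p q))‖ :=
        norm_matOp_TOp (hsupp (fun p => φ p.1 p.2) fun _ => map_zero _)
    _ ≤ c * d * ‖matOp (α.map ρ)‖ := by
        simp only [hφ]
        exact norm_matOp_adjoint_comp_le hc hd (fun p : Fin n × F => hV p.2)
          (fun q => hW q.2) (α.map ρ)
    _ ≤ c * d * ‖matOp (α.map ι)‖ := by grw [norm_matOp_map_le hι]
    _ = c * d * ‖matOp (Matrix.of fun i j => TKer ι (k i j))‖ :=
        congrArg (c * d * ·) (norm_matOp_TOp (hsupp (fun _ => ι) fun _ => map_zero _)).symm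

end SchurBound

section RelationProjection

variable {κ : Type*} [Fintype κ] {H : Type*} [NormedAddCommGroup H] [InnerProductSpace ℂ H]

theorem isStarProjection_matOp_map_algebraMap [CompleteSpace H] {P : Matrix κ κ ℂ}
    (hP : IsStarProjection P) :
    IsStarProjection (matOp (P.map (algebraMap ℂ (H →L[ℂ] H)))) where
  isIdempotentElem := by
    rw [IsIdempotentElem, ← matOp_mul, ← Matrix.map_mul, hP.isIdempotentElem.eq]
  isSelfAdjoint := by
    rw [IsSelfAdjoint, ← matOp_conjTranspose,
      ← Matrix.conjTranspose_map _ (algebraMap_star_comm ·),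
      ← Matrix.star_eq_conjTranspose, hP.isSelfAdjoint.star_eq]

theorem sum_norm_sq_sum_smul_le [CompleteSpace H] {P : Matrix κ κ ℂ} (hP : IsStarProjection P)
    (ζ : κ → H) : ∑ k, ‖∑ l, P k l • ζ l‖ ^ 2 ≤ ∑ l, ‖ζ l‖ ^ 2 := by
  let T := matOp (P.map (algebraMap ℂ (H →L[ℂ] H)))
  have hT : ‖T (WithLp.toLp 2 ζ)‖ ≤ ‖WithLp.toLp 2 ζ‖ := by
    simpa using T.le_of_opNorm_le (isStarProjection_matOp_map_algebraMap hP).norm_le _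
  simpa [PiLp.norm_sq_eq_of_L2, T, matOp_apply, Algebra.algebraMap_eq_smul_one] using
    pow_le_pow_left₀ (norm_nonneg _) hT 2

theorem exists_isStarProjection_relations {E : Type*} [AddCommGroup E] [Module ℂ E] (e : κ → E) :
    ∃ P : Matrix κ κ ℂ, IsStarProjection P ∧ (∀ k, ∑ l, P k l • e l = e k) ∧
      ∀ ζ : κ → H, ∃ ξ : E →ₗ[ℂ] H, ∀ k, ξ (e k) = ∑ l, P k l • ζ l := by
  classical
  -- `P` is the transpose of the projection along the space of linear relations among the `e k`.
  let u : EuclideanSpace ℂ κ →ₗ[ℂ] E :=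
    Fintype.linearCombination ℂ e ∘ₗ (WithLp.linearEquiv 2 ℂ (κ → ℂ)).toLinearMap
  let p : EuclideanSpace ℂ κ →L[ℂ] EuclideanSpace ℂ κ := (LinearMap.ker u)ᗮ.starProjection
  let M : Matrix κ κ ℂ := (Matrix.toEuclideanCLM (n := κ) (𝕜 := ℂ)).symm p
  have M_apply (k l) : M l k = p (EuclideanSpace.single k 1) l := by
    rw [← Matrix.toEuclideanCLM.apply_symm_apply p, Matrix.ofLp_toEuclideanCLM]
    simp [M]
  have hp : IsStarProjection p := isStarProjection_starProjection
  have hM : IsStarProjection M :=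
    ⟨hp.isIdempotentElem.map Matrix.toEuclideanCLM.symm,
      (Matrix.toEuclideanCLM.symm.map_star' p).symm.trans (congrArg _ hp.isSelfAdjoint)⟩
  have u_p (t) : u (p t) = u t := by
    refine (sub_eq_zero.mp ?_).symm
    rw [← map_sub, ← LinearMap.mem_ker, ← (LinearMap.ker u).orthogonal_orthogonal]
    exact (LinearMap.ker u)ᗮ.sub_starProjection_mem_orthogonal t
  refine ⟨Mᵀ, ⟨?_, ?_⟩, fun k => ?_, fun ζ => ?_⟩
  · rw [IsIdempotentElem, ← Matrix.transpose_mul, hM.isIdempotentElem.eq]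
  · exact Matrix.IsHermitian.transpose hM.isSelfAdjoint
  · simpa [u, M_apply, Fintype.linearCombination_apply] using u_p (EuclideanSpace.single k 1)
  · let f : EuclideanSpace ℂ κ →ₗ[ℂ] H :=
      Fintype.linearCombination ℂ ζ ∘ₗ (WithLp.linearEquiv 2 ℂ (κ → ℂ)).toLinearMap ∘ₗ p.toLinearMap
    have ker_le : LinearMap.ker u ≤ LinearMap.ker f := fun t ht => by
      have : p t = 0 := (LinearMap.ker u)ᗮ.starProjection_apply_eq_zero_iff.mpr
        ((LinearMap.ker u).orthogonal_orthogonal.symm ▸ ht)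
      simp [f, this]
    obtain ⟨ξ, hξ⟩ := exists_linearMap_comp_eq_of_ker_le u f ker_le
    refine ⟨ξ, fun k => ?_⟩
    simpa [u, f, M_apply, Fintype.linearCombination_apply] using
      LinearMap.congr_fun hξ (EuclideanSpace.single k 1)

end RelationProjection

section SesquilinearForm

variable {A E F : Type*} [AddCommGroup A] [Module ℂ A] [AddCommGroup E] [Module ℂ E]
  [AddCommGroup F] [Module ℂ F] {κ : Type*} [Fintype κ]

theorem sum_sesquilinear_conj_smul (B : E →ₗ⋆[ℂ] F →ₗ[ℂ] A →ₗ[ℂ] ℂ) (P Q : Matrix κ κ ℂ)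
    (e : κ → E) (f : κ → F) (a : Matrix κ κ A) :
    ∑ i, ∑ j, B (e i) (f j) (∑ k, ∑ l, (conj (P k i) * Q l j) • a k l) =
      ∑ k, ∑ l, B (∑ i, P k i • e i) (∑ j, Q l j • f j) (a k l) := by
  have expand_left (i j) : B (e i) (f j) (∑ k, ∑ l, (conj (P k i) * Q l j) • a k l) =
      ∑ k, ∑ l, conj (P k i) * Q l j * B (e i) (f j) (a k l) := by
    simp only [map_sum, map_smul, smul_eq_mul]
  have expand_right (k l) : B (∑ i, P k i • e i) (∑ j, Q l j • f j) (a k l) =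
      ∑ i, ∑ j, conj (P k i) * Q l j * B (e i) (f j) (a k l) := by
    simp only [map_sum, map_smul, map_smulₛₗ, LinearMap.sum_apply, LinearMap.smul_apply,
      smul_eq_mul, Finset.mul_sum, mul_assoc]
    exact Finset.sum_comm.trans
      (Fintype.sum_congr _ _ fun i => Fintype.sum_congr _ _ fun j => mul_left_comm _ _ _)
  simp only [expand_left, expand_right]
  have move_past (t : κ → κ → κ → ℂ) : ∑ i, ∑ j, ∑ l, t i j l = ∑ l, ∑ i, ∑ j, t i j l :=
    (Fintype.sum_congr _ _ fun _ => Finset.sum_comm).trans Finset.sum_comm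
  exact (move_past _).trans (Fintype.sum_congr _ _ fun _ => move_past _)

end SesquilinearForm

section OperatorForm

variable {A : Type*} [AddCommGroup A] [Module ℂ A] {H : Type*} [NormedAddCommGroup H]
  [InnerProductSpace ℂ H] {X : Type*}

/-- The sesquilinear form `(v, w) ↦ ⟪v, ψ(·) w⟫` of a linear family of operators, with values in
the algebraic dual of `A`. -/
def operatorForm (ψ : A →ₗ[ℂ] (H →L[ℂ] H)) : H →ₗ⋆[ℂ] H →ₗ[ℂ] A →ₗ[ℂ] ℂ :=
  LinearMap.mk₂'ₛₗ (starRingEnd ℂ) (RingHom.id ℂ)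
    (fun v w => innerₛₗ ℂ v ∘ₗ (ContinuousLinearMap.apply ℂ H w).toLinearMap ∘ₗ ψ)
    (fun _ _ _ => by ext; simp)
    (fun _ _ _ => by ext; simp)
    (fun _ _ _ => by ext; simp [inner_add_right])
    (fun _ _ _ => by ext; simp [inner_smul_right])

@[simp]
theorem operatorForm_apply (ψ : A →ₗ[ℂ] (H →L[ℂ] H)) (v w : H) (a : A) :
    operatorForm ψ v w a = ⟪v, ψ a w⟫_ℂ := rfl

/-- The sesquilinear form on finitely supported functions `X → H` that an operator-valued
kernel `φ` induces. -/
def kernelForm (φ : X → X → (A →ₗ[ℂ] (H →L[ℂ] H))) :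
    (X →₀ H) →ₗ⋆[ℂ] (X →₀ H) →ₗ[ℂ] A →ₗ[ℂ] ℂ :=
  Finsupp.lsum ℂ fun x => (Finsupp.lsum ℂ fun y => (operatorForm (φ x y)).flip).flip

@[simp]
theorem kernelForm_single_single (φ : X → X → (A →ₗ[ℂ] (H →L[ℂ] H))) (x y : X) (h g : H) (a : A) :
    kernelForm φ (Finsupp.single x h) (Finsupp.single y g) a = ⟪h, φ x y a g⟫_ℂ := by
  simp [kernelForm]

end OperatorForm

section SeparationEstimate

variable {A : Type*} [NonUnitalCStarAlgebra A] {H : Type*} [NormedAddCommGroup H]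
  [InnerProductSpace ℂ H] [CompleteSpace H] {X ν : Type*} [Fintype ν]

/- The hypothesis only tests `a` on tuples `ξ (e i)`, `η (f j)`, which obey the linear relations
among the `e i` and the `f j`. Compressing `a` by the projections onto such tuples makes the test
valid on all tuples, bounding its norm, and leaves the value of `B` unchanged. -/
theorem re_sum_sesquilinear_le_two_mul {E F : Type*} [AddCommGroup E] [Module ℂ E]
    [AddCommGroup F] [Module ℂ F] (ι : A →⋆ₙₐ[ℂ] (H →L[ℂ] H))
    (B : E →ₗ⋆[ℂ] F →ₗ[ℂ] A →ₗ[ℂ] ℂ) (e : ν → E) (f : ν → F) {M : ℝ} (hM : 0 ≤ M)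
    (hB : ∀ α : Matrix ν ν A, ‖∑ i, ∑ j, B (e i) (f j) (α i j)‖ ≤ M * ‖matOp (α.map ι)‖)
    (a : Matrix ν ν A)
    (ha : ∀ (ξ : E →ₗ[ℂ] H) (η : F →ₗ[ℂ] H),
      (∑ i, ∑ j, ⟪ξ (e i), ι (a i j) (η (f j))⟫_ℂ).re ≤ ∑ i, ‖ξ (e i)‖ ^ 2 + ∑ j, ‖η (f j)‖ ^ 2) :
    (∑ i, ∑ j, B (e i) (f j) (a i j)).re ≤ 2 * M := by
  obtain ⟨P, hP, P_e, exists_ξ⟩ := exists_isStarProjection_relations (H := H) e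
  obtain ⟨Q, hQ, Q_f, exists_η⟩ := exists_isStarProjection_relations (H := H) f
  let α : Matrix ν ν A := .of fun i j => ∑ k, ∑ l, (conj (P k i) * Q l j) • a k l
  have sum_α : ∑ i, ∑ j, B (e i) (f j) (α i j) = ∑ i, ∑ j, B (e i) (f j) (a i j) := by
    simp only [α, Matrix.of_apply, sum_sesquilinear_conj_smul, P_e, Q_f]
  have norm_α : ‖matOp (α.map ι)‖ ≤ 2 := by
    refine opNorm_le_two_of_re_inner_le_add_sq fun w v => ?_
    obtain ⟨ξ, hξ⟩ := exists_ξ w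
    obtain ⟨η, hη⟩ := exists_η v
    have inner_α : ⟪w, matOp (α.map ι) v⟫_ℂ = ∑ k, ∑ l, ⟪ξ (e k), ι (a k l) (η (f l))⟫_ℂ := by
      rw [inner_matOp]
      simp only [hξ, hη]
      exact sum_sesquilinear_conj_smul (operatorForm (ι : A →ₗ[ℂ] (H →L[ℂ] H))) P Q w v a
    calc (⟪w, matOp (α.map ι) v⟫_ℂ).re
        ≤ ∑ k, ‖∑ i, P k i • w i‖ ^ 2 + ∑ l, ‖∑ j, Q l j • v j‖ ^ 2 := by
          simpa only [inner_α, hξ, hη] using ha ξ η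
      _ ≤ ‖w‖ ^ 2 + ‖v‖ ^ 2 := by
          rw [PiLp.norm_sq_eq_of_L2, PiLp.norm_sq_eq_of_L2]
          exact add_le_add (sum_norm_sq_sum_smul_le hP _) (sum_norm_sq_sum_smul_le hQ _)
  calc (∑ i, ∑ j, B (e i) (f j) (a i j)).re
      ≤ ‖∑ i, ∑ j, B (e i) (f j) (α i j)‖ := sum_α ▸ Complex.re_le_norm _
    _ ≤ M * ‖matOp (α.map ι)‖ := hB α
    _ ≤ 2 * M := by rw [mul_comm]; gcongr

variable {ι : A →⋆ₙₐ[ℂ] (H →L[ℂ] H)} {φ : X → X → (A →ₗ[ℂ] (H →L[ℂ] H))} {C : ℝ}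

theorem SchurBound.re_sum_inner_le (hφ : SchurBound ι φ C) (hC : 0 ≤ C) (x y : ν → X)
    (h g : ν → H) (a : Matrix ν ν A)
    (ha : ∀ ξ η : (X →₀ H) →ₗ[ℂ] H,
      (∑ i, ∑ j, ⟪ξ (.single (x i) (h i)), ι (a i j) (η (.single (y j) (g j)))⟫_ℂ).re ≤
        ∑ i, ‖ξ (.single (x i) (h i))‖ ^ 2 + ∑ j, ‖η (.single (y j) (g j))‖ ^ 2) :
    (∑ i, ∑ j, ⟪h i, φ (x i) (y j) (a i j) (g j)⟫_ℂ).re ≤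
      C * (∑ i, ‖h i‖ ^ 2 + ∑ j, ‖g j‖ ^ 2) := by
  let h' : PiLp 2 fun _ : ν => H := WithLp.toLp 2 h
  let g' : PiLp 2 fun _ : ν => H := WithLp.toLp 2 g
  have form_le (α : Matrix ν ν A) : ‖∑ i, ∑ j, ⟪h i, φ (x i) (y j) (α i j) (g j)⟫_ℂ‖ ≤
      (C * ‖h'‖ * ‖g'‖) * ‖matOp (α.map ι)‖ := by
    let T := matOp (Matrix.of fun i j => φ (x i) (y j) (α i j))
    calc ‖∑ i, ∑ j, ⟪h i, φ (x i) (y j) (α i j) (g j)⟫_ℂ‖ = ‖⟪h', T g'⟫_ℂ‖ := by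
          rw [inner_matOp]; rfl
      _ ≤ ‖h'‖ * (‖T‖ * ‖g'‖) := by grw [norm_inner_le_norm, T.le_opNorm]
      _ ≤ ‖h'‖ * (C * ‖matOp (α.map ι)‖ * ‖g'‖) := by grw [hφ.norm_matOp_le x y α]
      _ = _ := by ring
  have key := re_sum_sesquilinear_le_two_mul ι (kernelForm φ) (fun i => .single (x i) (h i))
    (fun j => .single (y j) (g j)) (M := C * ‖h'‖ * ‖g'‖) (by positivity)
    (by simpa using form_le) a ha
  calc (∑ i, ∑ j, ⟪h i, φ (x i) (y j) (a i j) (g j)⟫_ℂ).re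
      ≤ C * (2 * ‖h'‖ * ‖g'‖) := by simpa [mul_assoc, mul_left_comm] using key
    _ ≤ C * (‖h'‖ ^ 2 + ‖g'‖ ^ 2) := by grw [two_mul_le_add_sq]
    _ = _ := by simp only [PiLp.norm_sq_eq_of_L2, h', g']

theorem SchurBound.re_sum_inner_le_of_pos (hφ : SchurBound ι φ C) (hC : 0 ≤ C) (x y : ν → X)
    (h g : ν → H) (a : Matrix ν ν A) {c d : ν → ℝ} (hc : ∀ i, 0 < c i) (hd : ∀ j, 0 < d j)
    (ha : ∀ ξ η : (X →₀ H) →ₗ[ℂ] H,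
      (∑ i, ∑ j, ⟪ξ (.single (x i) (h i)), ι (a i j) (η (.single (y j) (g j)))⟫_ℂ).re ≤
        ∑ i, c i * ‖ξ (.single (x i) (h i))‖ ^ 2 + ∑ j, d j * ‖η (.single (y j) (g j))‖ ^ 2) :
    (∑ i, ∑ j, ⟪h i, φ (x i) (y j) (a i j) (g j)⟫_ℂ).re ≤
      C * (∑ i, c i * ‖h i‖ ^ 2 + ∑ j, d j * ‖g j‖ ^ 2) := by
  let r (i : ν) : ℂ := (√(c i) : ℝ)
  let s (j : ν) : ℂ := (√(d j) : ℝ)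
  have r_ne (i) : r i ≠ 0 := Complex.ofReal_ne_zero.mpr (Real.sqrt_pos.mpr (hc i)).ne'
  have s_ne (j) : s j ≠ 0 := Complex.ofReal_ne_zero.mpr (Real.sqrt_pos.mpr (hd j)).ne'
  have norm_r_smul (i) (v : H) : ‖r i • v‖ ^ 2 = c i * ‖v‖ ^ 2 := by
    simp [r, norm_smul, mul_pow, (hc i).le]
  have norm_s_smul (j) (v : H) : ‖s j • v‖ ^ 2 = d j * ‖v‖ ^ 2 := by
    simp [s, norm_smul, mul_pow, (hd j).le]
  have rescale (i j) (v w : H) (ψ : A →ₗ[ℂ] (H →L[ℂ] H)) :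
      ⟪r i • v, ψ ((r i * s j)⁻¹ • a i j) (s j • w)⟫_ℂ = ⟪v, ψ (a i j) w⟫_ℂ := by
    have conj_r : conj (r i) = r i := Complex.conj_ofReal _
    simp only [map_smul, _root_.smul_apply, inner_smul_left, inner_smul_right, conj_r]
    field_simp [r_ne i, s_ne j]
  have rescale_ι (i j) (v w : H) :
      ⟪r i • v, ι ((r i * s j)⁻¹ • a i j) (s j • w)⟫_ℂ = ⟪v, ι (a i j) w⟫_ℂ :=
    rescale i j v w (ι : A →ₗ[ℂ] (H →L[ℂ] H))
  have key := hφ.re_sum_inner_le hC x y (fun i => r i • h i) (fun j => s j • g j)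
    (.of fun i j => (r i * s j)⁻¹ • a i j) fun ξ η => by
      simpa only [← Finsupp.smul_single, map_smul ξ, map_smul η, Matrix.of_apply, rescale_ι,
        norm_r_smul, norm_s_smul] using ha ξ η
  simpa only [Matrix.of_apply, rescale, norm_r_smul, norm_s_smul] using key

theorem SchurBound.re_sum_inner_le_of_nonneg (hφ : SchurBound ι φ C) (hC : 0 ≤ C) (x y : ν → X)
    (h g : ν → H) (a : Matrix ν ν A) {c d : ν → ℝ} (hc : ∀ i, 0 ≤ c i) (hd : ∀ j, 0 ≤ d j)
    (ha : ∀ ξ η : (X →₀ H) →ₗ[ℂ] H,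
      (∑ i, ∑ j, ⟪ξ (.single (x i) (h i)), ι (a i j) (η (.single (y j) (g j)))⟫_ℂ).re ≤
        ∑ i, c i * ‖ξ (.single (x i) (h i))‖ ^ 2 + ∑ j, d j * ‖η (.single (y j) (g j))‖ ^ 2) :
    (∑ i, ∑ j, ⟪h i, φ (x i) (y j) (a i j) (g j)⟫_ℂ).re ≤
      C * (∑ i, c i * ‖h i‖ ^ 2 + ∑ j, d j * ‖g j‖ ^ 2) := by
  let bound (ε : ℝ) : ℝ := C * (∑ i, (c i + ε) * ‖h i‖ ^ 2 + ∑ j, (d j + ε) * ‖g j‖ ^ 2)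
  have le_bound : ∀ ε > 0, (∑ i, ∑ j, ⟪h i, φ (x i) (y j) (a i j) (g j)⟫_ℂ).re ≤ bound ε := by
    refine fun ε hε => hφ.re_sum_inner_le_of_pos hC x y h g a
      (fun i => add_pos_of_nonneg_of_pos (hc i) hε)
      (fun j => add_pos_of_nonneg_of_pos (hd j) hε) fun ξ η => (ha ξ η).trans ?_
    gcongr <;> exact le_add_of_nonneg_right hε.le
  have tendsto_bound : Filter.Tendsto bound (nhdsWithin 0 (Set.Ioi 0)) (nhds (bound 0)) :=
    (Continuous.tendsto (by fun_prop) 0).mono_left nhdsWithin_le_nhds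
  simpa [bound] using ge_of_tendsto tendsto_bound (eventually_nhdsWithin_of_forall le_bound)

end SeparationEstimate

section InnerSum

variable {A : Type*} [AddCommGroup A] [Module ℂ A] {H : Type*} [NormedAddCommGroup H]
  [InnerProductSpace ℂ H] {I J : Type*}

/-- The linear functional `a ↦ ∑ i j, ⟪v i, ψ i j (a (i, j)) (w j)⟫` on finitely supported
families `a` in `A`. -/
def innerSum (ψ : I → J → (A →ₗ[ℂ] (H →L[ℂ] H))) (v : I → H) (w : J → H) :
    (I × J →₀ A) →ₗ[ℂ] ℂ :=
  Finsupp.lsum ℂ fun p => operatorForm (ψ p.1 p.2) (v p.1) (w p.2)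

theorem innerSum_single (ψ : I → J → (A →ₗ[ℂ] (H →L[ℂ] H))) (v : I → H) (w : J → H) (p : I × J)
    (a : A) : innerSum ψ v w (.single p a) = ⟪v p.1, ψ p.1 p.2 a (w p.2)⟫_ℂ := by
  simp [innerSum]

theorem innerSum_apply_of_support_subset (ψ : I → J → (A →ₗ[ℂ] (H →L[ℂ] H))) (v : I → H)
    (w : J → H) {d : I × J →₀ A} {s : Finset I} {t : Finset J} (hd : d.support ⊆ s ×ˢ t) :
    innerSum ψ v w d = ∑ i : s, ∑ j : t, ⟪v i, ψ i j (d (i, j)) (w j)⟫_ℂ := by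
  rw [innerSum, Finsupp.lsum_apply, Finsupp.sum_of_support_subset _ hd _ (by simp),
    Finset.sum_product, ← Finset.sum_coe_sort]
  exact Fintype.sum_congr _ _ fun i => (Finset.sum_coe_sort _ _).symm

theorem abs_re_inner_le_opNorm_mul_add_sq (T : H →L[ℂ] H) (v w : H) :
    |(⟪v, T w⟫_ℂ).re| ≤ ‖T‖ * (‖v‖ ^ 2 + ‖w‖ ^ 2) :=
  calc |(⟪v, T w⟫_ℂ).re| ≤ ‖v‖ * (‖T‖ * ‖w‖) := by
        grw [Complex.abs_re_le_norm, norm_inner_le_norm, T.le_opNorm]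
    _ = ‖T‖ * (‖v‖ * ‖w‖) := by ring
    _ ≤ ‖T‖ * (‖v‖ ^ 2 + ‖w‖ ^ 2) := by
        gcongr
        nlinarith [two_mul_le_add_sq ‖v‖ ‖w‖, mul_nonneg (norm_nonneg v) (norm_nonneg w)]

end InnerSum

theorem linearCombination_of_support_subset_disjSum {R M I J : Type*} [Semiring R]
    [AddCommMonoid M] [Module R M] (q : I ⊕ J → M) {c : I ⊕ J →₀ R} {s : Finset I} {t : Finset J}
    (hc : c.support ⊆ s.disjSum t) :
    Finsupp.linearCombination R q c =
      ∑ i : s, c (.inl i) • q (.inl i) + ∑ j : t, c (.inr j) • q (.inr j) := by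
  rw [Finsupp.linearCombination_apply, Finsupp.sum_of_support_subset _ hc _ (by simp),
    Finset.sum_disjSum, ← Finset.sum_coe_sort s, ← Finset.sum_coe_sort t]

theorem exists_finset_support_subset {A R I : Type*} [Zero A] [Zero R] (d : I × I →₀ A)
    (c : I ⊕ I →₀ R) : ∃ s : Finset I, d.support ⊆ s ×ˢ s ∧ c.support ⊆ s.disjSum s := by
  classical
  refine ⟨d.support.image Prod.fst ∪ d.support.image Prod.snd ∪
    (c.support.toLeft ∪ c.support.toRight), ?_, ?_⟩
  · refine Finset.subset_product.trans (Finset.product_subset_product ?_ ?_) <;> grind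
  · exact c.support.toLeft_disjSum_toRight.symm.subset.trans
      (Finset.disjSum_mono (by grind) (by grind))

section RepresentingFunctional

variable {A : Type*} [NonUnitalCStarAlgebra A] {H : Type*} [NormedAddCommGroup H]
  [InnerProductSpace ℂ H] [CompleteSpace H] {X Ξ : Type*}
  {ι : A →⋆ₙₐ[ℂ] (H →L[ℂ] H)} {φ : X → X → (A →ₗ[ℂ] (H →L[ℂ] H))} {C : ℝ}

/-- The functions `ζ ↦ ‖ξ (δₓ ⊗ h)‖ ^ 2` and `ζ ↦ ‖η (δₓ ⊗ h)‖ ^ 2`, where `(ξ, η)` is the pair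
of linear maps at `ζ`. -/
def sqNorms (pair : Ξ → ((X →₀ H) →ₗ[ℂ] H) × ((X →₀ H) →ₗ[ℂ] H)) :
    (X × H) ⊕ (X × H) → Ξ → ℝ :=
  Sum.elim (fun i ζ => ‖(pair ζ).1 (.single i.1 i.2)‖ ^ 2)
    (fun j ζ => ‖(pair ζ).2 (.single j.1 j.2)‖ ^ 2)

/-- The linear map taking a finitely supported family `a` to the function
`ζ ↦ ∑ ⟪ξ (δₓ ⊗ h), ι (a ((x, h), (y, g))) (η (δ_y ⊗ g))⟫`, where `(ξ, η)` is the pair of linear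
maps at `ζ`. -/
def pairingMap (ι : A →⋆ₙₐ[ℂ] (H →L[ℂ] H))
    (pair : Ξ → ((X →₀ H) →ₗ[ℂ] H) × ((X →₀ H) →ₗ[ℂ] H)) :
    ((X × H) × (X × H) →₀ A) →ₗ[ℂ] (Ξ → ℂ) :=
  LinearMap.pi fun ζ => innerSum (fun _ _ => (ι : A →ₗ[ℂ] (H →L[ℂ] H)))
    (fun i => (pair ζ).1 (.single i.1 i.2)) (fun j => (pair ζ).2 (.single j.1 j.2))

theorem pairingMap_single (pair : Ξ → ((X →₀ H) →ₗ[ℂ] H) × ((X →₀ H) →ₗ[ℂ] H))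
    (p : (X × H) × (X × H)) (a : A) : pairingMap ι pair (.single p a) = fun ζ =>
      ⟪(pair ζ).1 (.single p.1.1 p.1.2), ι a ((pair ζ).2 (.single p.2.1 p.2.2))⟫_ℂ := by
  funext ζ
  rw [pairingMap, LinearMap.pi_apply, innerSum_single]
  rfl

theorem re_pairingMap_mem_dominated (pair : Ξ → ((X →₀ H) →ₗ[ℂ] H) × ((X →₀ H) →ₗ[ℂ] H))
    (d : (X × H) × (X × H) →₀ A) :
    (fun ζ => (pairingMap ι pair d ζ).re) ∈ DaniellFunctional.dominated (sqNorms pair) := by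
  induction d using Finsupp.induction_linear with
  | zero =>
    simp only [map_zero, Pi.zero_apply, Complex.zero_re]
    exact zero_mem _
  | add d e hd he =>
    simp only [map_add, Pi.add_apply, Complex.add_re]
    exact add_mem hd he
  | single p a =>
    refine ⟨.single (.inl p.1) ‖ι a‖₊ + .single (.inr p.2) ‖ι a‖₊, fun ζ => ?_⟩
    simpa [pairingMap_single, sqNorms, NNReal.smul_def, mul_add] using
      abs_re_inner_le_opNorm_mul_add_sq (ι a) ((pair ζ).1 (.single p.1.1 p.1.2))
        ((pair ζ).2 (.single p.2.1 p.2.2))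

theorem SchurBound.re_innerSum_le (hφ : SchurBound ι φ C) (hC : 0 ≤ C)
    {pair : Ξ → ((X →₀ H) →ₗ[ℂ] H) × ((X →₀ H) →ₗ[ℂ] H)} (hpair : Function.Surjective pair)
    (d : (X × H) × (X × H) →₀ A) (c : (X × H) ⊕ (X × H) →₀ ℝ≥0)
    (hdc : ∀ ζ, (pairingMap ι pair d ζ).re ≤
      Finsupp.linearCombination ℝ≥0 (sqNorms pair) c ζ) :
    (innerSum (fun i j => φ i.1 j.1) Prod.snd Prod.snd d).re ≤
      Finsupp.linearCombination ℝ≥0 (Sum.elim (C * ‖·.2‖ ^ 2) (C * ‖·.2‖ ^ 2)) c := by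
  obtain ⟨s, hds, hcs⟩ := exists_finset_support_subset d c
  have key := hφ.re_sum_inner_le_of_nonneg hC (fun i : s => i.1.1) (fun j : s => j.1.1)
    (fun i => i.1.2) (fun j => j.1.2) (.of fun i j => d (i.1, j.1))
    (c := fun i => c (.inl i)) (d := fun j => c (.inr j)) (fun _ => NNReal.coe_nonneg _)
    (fun _ => NNReal.coe_nonneg _) fun ξ η => by
      obtain ⟨ζ, hζ⟩ := hpair (ξ, η)
      simpa [pairingMap, innerSum_apply_of_support_subset _ _ _ hds,
        linearCombination_of_support_subset_disjSum _ hcs, sqNorms, hζ, NNReal.smul_def]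
        using hdc ζ
  rw [innerSum_apply_of_support_subset _ _ _ hds,
    linearCombination_of_support_subset_disjSum _ hcs]
  simpa [NNReal.smul_def, mul_add, Finset.mul_sum, mul_left_comm] using key

theorem SchurBound.exists_daniellFunctional (hφ : SchurBound ι φ C) (hC : 0 ≤ C)
    {pair : Ξ → ((X →₀ H) →ₗ[ℂ] H) × ((X →₀ H) →ₗ[ℂ] H)} (hpair : Function.Surjective pair) :
    ∃ 𝓛 : DaniellFunctional Ξ,
      (∀ x, 𝓛.IsSquareBounded (fun ζ => (pair ζ).1 ∘ₗ Finsupp.lsingle x) C) ∧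
      (∀ y, 𝓛.IsSquareBounded (fun ζ => (pair ζ).2 ∘ₗ Finsupp.lsingle y) C) ∧
      ∀ x y h g a, 𝓛.complexify (fun ζ =>
        ⟪(pair ζ).1 (.single x h), ι a ((pair ζ).2 (.single y g))⟫_ℂ) = ⟪h, φ x y a g⟫_ℂ := by
  have sqNorms_nonneg (k) : 0 ≤ sqNorms pair k := fun ζ => by
    cases k <;> exact sq_nonneg _
  obtain ⟨𝓛, h𝓛, h𝓛φ⟩ := DaniellFunctional.exists_forall_le_and_complexify_eq sqNorms_nonneg
    (pairingMap ι pair) (innerSum (fun i j => φ i.1 j.1) Prod.snd Prod.snd)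
    (re_pairingMap_mem_dominated pair) (hφ.re_innerSum_le hC hpair)
  refine ⟨𝓛, fun x h => h𝓛 (.inl (x, h)), fun y g => h𝓛 (.inr (y, g)), fun x y h g a => ?_⟩
  have := h𝓛φ (.single ((x, h), (y, g)) a)
  rwa [pairingMap_single, innerSum_single] at this

end RepresentingFunctional

section MainTheorem

variable {A : Type u} [NonUnitalCStarAlgebra A] {H : Type v} [NormedAddCommGroup H]
  [InnerProductSpace ℂ H] [CompleteSpace H] {X : Type w}
  {ι : A →⋆ₙₐ[ℂ] (H →L[ℂ] H)} {φ : X → X → (A →ₗ[ℂ] (H →L[ℂ] H))} {C : ℝ}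

theorem SchurBound.exists_opValuedRep (hφ : SchurBound ι φ C) (hC : 0 ≤ C) :
    ∃ R : OpValuedRep A H X, NondegenerateRep R.ρ ∧
      (∀ x, ‖R.V x‖ ≤ √C) ∧ (∀ y, ‖R.W y‖ ≤ √C) ∧
      ∀ x y a, φ x y a = ContinuousLinearMap.adjoint (R.V x) ∘L R.ρ a ∘L R.W y := by
  obtain ⟨𝓛, hV, hW, h𝓛⟩ := hφ.exists_daniellFunctional hC ULift.down_surjective.{max v w, u}
  let ρ : A →⋆ₙₐ[ℂ] (𝓛.L2 H →L[ℂ] 𝓛.L2 H) := 𝓛.pointwiseRep.comp ι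
  have norm_proj_comp_le {T : H →L[ℂ] 𝓛.L2 H} (hT : ‖T‖ ≤ √C) :
      ‖essentialProjection ρ ∘L T‖ ≤ √C := by
    grw [ContinuousLinearMap.opNorm_comp_le, Submodule.orthogonalProjectionOnto_norm_le, one_mul,
      hT]
  refine ⟨⟨essentialSubspace ρ, essentialRep ρ, fun x => essentialProjection ρ ∘L (hV x).toL2,
      fun y => essentialProjection ρ ∘L (hW y).toL2⟩, nondegenerateRep_essentialRep ρ,
    fun x => norm_proj_comp_le (hV x).norm_toL2_le, fun y => norm_proj_comp_le (hW y).norm_toL2_le,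
    fun x y a => ?_⟩
  ext g
  refine ext_inner_left ℂ fun h => ?_
  have inner_φ : ⟪h, φ x y a g⟫_ℂ = ⟪essentialProjection ρ ((hV x).toL2 h),
      essentialRep ρ a (essentialProjection ρ ((hW y).toL2 g))⟫_ℂ := by
    rw [inner_essentialProjection_essentialRep, ← h𝓛]
    exact ((hV x).inner_toL2_pointwiseRep (hW y) (ι a) h g).symm
  exact inner_φ.trans
    (ContinuousLinearMap.adjoint_inner_right (essentialProjection ρ ∘L (hV x).toL2) h _).symm

theorem IsSchurMultiplier.schurNorm_nonneg (hφ : IsSchurMultiplier ι φ) : 0 ≤ schurNorm ι φ :=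
  le_csInf hφ fun _ hC => hC.1

theorem IsSchurMultiplier.schurBound_schurNorm (hφ : IsSchurMultiplier ι φ) :
    SchurBound ι φ (schurNorm ι φ) := fun n k hk => by
  have norm_nonneg := norm_nonneg (matOp (Matrix.of fun i j => TKer ι (k i j)))
  rcases norm_nonneg.eq_or_lt with norm_zero | norm_pos
  · obtain ⟨C, -, hC⟩ := hφ
    simpa only [← norm_zero, mul_zero] using hC n k hk
  · rw [← div_le_iff₀ norm_pos]
    exact le_csInf hφ fun C hC => (div_le_iff₀ norm_pos).mpr (hC.2 n k hk)

theorem schurNorm_le_of_adjoint_comp (hι : Function.Injective ι) {R : OpValuedRep A H X}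
    (hV : BddAbove (Set.range fun x => ‖R.V x‖)) (hW : BddAbove (Set.range fun y => ‖R.W y‖))
    (hφ : ∀ x y a, φ x y a = ContinuousLinearMap.adjoint (R.V x) ∘L R.ρ a ∘L R.W y) :
    schurNorm ι φ ≤ (⨆ x, ‖R.V x‖) * ⨆ y, ‖R.W y‖ := by
  have hc : 0 ≤ ⨆ x, ‖R.V x‖ := Real.iSup_nonneg fun _ => norm_nonneg _
  have hd : 0 ≤ ⨆ y, ‖R.W y‖ := Real.iSup_nonneg fun _ => norm_nonneg _
  exact csInf_le ⟨0, fun _ hC => hC.1⟩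
    ⟨mul_nonneg hc hd, schurBound_of_adjoint_comp hι hc hd (le_ciSup hV) (le_ciSup hW) hφ⟩

theorem IsSchurMultiplier.exists_opValuedRep_schurNorm_eq (hι : Function.Injective ι)
    (hφ : IsSchurMultiplier ι φ) :
    ∃ R : OpValuedRep A H X, NondegenerateRep R.ρ ∧
      (∃ C, ∀ x, ‖R.V x‖ ≤ C) ∧ (∃ C, ∀ y, ‖R.W y‖ ≤ C) ∧
      (∀ x y a, φ x y a = ContinuousLinearMap.adjoint (R.V x) ∘L R.ρ a ∘L R.W y) ∧
      schurNorm ι φ = (⨆ x, ‖R.V x‖) * ⨆ y, ‖R.W y‖ := by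
  obtain ⟨R, hR, hV, hW, hRφ⟩ := hφ.schurBound_schurNorm.exists_opValuedRep hφ.schurNorm_nonneg
  refine ⟨R, hR, ⟨_, hV⟩, ⟨_, hW⟩, hRφ, le_antisymm ?_ ?_⟩
  · exact schurNorm_le_of_adjoint_comp hι ⟨_, Set.forall_mem_range.mpr hV⟩
      ⟨_, Set.forall_mem_range.mpr hW⟩ hRφ
  · calc (⨆ x, ‖R.V x‖) * ⨆ y, ‖R.W y‖ ≤ √(schurNorm ι φ) * √(schurNorm ι φ) :=
          mul_le_mul (Real.iSup_le hV (Real.sqrt_nonneg _)) (Real.iSup_le hW (Real.sqrt_nonneg _))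
            (Real.iSup_nonneg fun _ => norm_nonneg _) (Real.sqrt_nonneg _)
      _ = schurNorm ι φ := Real.mul_self_sqrt hφ.schurNorm_nonneg

theorem isSchurMultiplier_of_adjoint_comp (hι : Function.Injective ι) {R : OpValuedRep A H X}
    {c d : ℝ} (hV : ∀ x, ‖R.V x‖ ≤ c) (hW : ∀ y, ‖R.W y‖ ≤ d)
    (hφ : ∀ x y a, φ x y a = ContinuousLinearMap.adjoint (R.V x) ∘L R.ρ a ∘L R.W y) :
    IsSchurMultiplier ι φ :=
  ⟨max c 0 * max d 0, by positivity,
    schurBound_of_adjoint_comp hι (le_max_right _ _) (le_max_right _ _)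
      (fun x => le_max_of_le_left (hV x)) (fun y => le_max_of_le_left (hW y)) hφ⟩

end MainTheorem

theorem schur_A_multiplier_iff_general
    {X : Type*} {H : Type*} [NormedAddCommGroup H] [InnerProductSpace ℂ H]
    [CompleteSpace H] {A : Type*} [NonUnitalCStarAlgebra A]
    (ι : A →⋆ₙₐ[ℂ] (H →L[ℂ] H)) (hι : Function.Injective ι)
    (φ : X → X → (A →ₗ[ℂ] (H →L[ℂ] H))) :
    (IsSchurMultiplier ι φ ↔
      ∃ R : OpValuedRep A H X, NondegenerateRep R.ρ ∧
        (∃ C : ℝ, ∀ x : X, ‖R.V x‖ ≤ C) ∧ (∃ C : ℝ, ∀ y : X, ‖R.W y‖ ≤ C) ∧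
        ∀ (x y : X) (a : A),
          φ x y a = (ContinuousLinearMap.adjoint (R.V x)) ∘L (R.ρ a) ∘L (R.W y)) ∧
    (IsSchurMultiplier ι φ →
      ∃ R : OpValuedRep A H X, NondegenerateRep R.ρ ∧
        (∃ C : ℝ, ∀ x : X, ‖R.V x‖ ≤ C) ∧ (∃ C : ℝ, ∀ y : X, ‖R.W y‖ ≤ C) ∧
        (∀ (x y : X) (a : A),
          φ x y a = (ContinuousLinearMap.adjoint (R.V x)) ∘L (R.ρ a) ∘L (R.W y)) ∧
        schurNorm ι φ = (⨆ x : X, ‖R.V x‖) * (⨆ y : X, ‖R.W y‖)) := by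
  refine ⟨⟨fun h => ?_, fun ⟨R, _, ⟨_, hV⟩, ⟨_, hW⟩, hφ⟩ => ?_⟩, fun h => ?_⟩
  · obtain ⟨R, hR, hV, hW, hφ, -⟩ := h.exists_opValuedRep_schurNorm_eq hι
    exact ⟨R, hR, hV, hW, hφ⟩
  · exact isSchurMultiplier_of_adjoint_comp hι hV hW hφ
  · exact h.exists_opValuedRep_schurNorm_eq hι

/-- **Theorem 2.1 (Schur `A`-multiplier characterisation).**
Let `X` be a set, `H` a Hilbert space, `A ⊆ B(H)` a non-degenerate C*-algebra
(realised through an isometric non-degenerate *-monomorphism `ι : A → B(H)`), and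
`φ : X × X → CB(A, B(H))` a bounded function.  Then `φ` is a Schur `A`-multiplier if and
only if there are a Hilbert space `K`, a non-degenerate *-representation `ρ : A → B(K)`
and bounded functions `V, W : X → B(H,K)` with `φ(x,y)(a) = V(x)* ρ(a) W(y)`; moreover,
in that case `V` and `W` may be chosen so that
`‖φ‖ₘ = sup_x ‖V(x)‖ ⬝ sup_y ‖W(y)‖`. -/
theorem schur_A_multiplier_iff
    {X : Type*} {H : Type*} [NormedAddCommGroup H] [InnerProductSpace ℂ H]
    [CompleteSpace H] {A : Type*} [NonUnitalCStarAlgebra A]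
    (ι : A →⋆ₙₐ[ℂ] (H →L[ℂ] H)) (hisom : ∀ a : A, ‖ι a‖ = ‖a‖)
    (hnd : NondegenerateRep ι)
    (φ : X → X → (A →ₗ[ℂ] (H →L[ℂ] H)))
    (hbdd : ∃ C : ℝ, 0 ≤ C ∧ ∀ x y : X, CBBound (fun a => ι a) (fun T => T) (φ x y) C) :
    (IsSchurMultiplier ι φ ↔
      ∃ R : OpValuedRep A H X, NondegenerateRep R.ρ ∧
        (∃ C : ℝ, ∀ x : X, ‖R.V x‖ ≤ C) ∧ (∃ C : ℝ, ∀ y : X, ‖R.W y‖ ≤ C) ∧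
        ∀ (x y : X) (a : A),
          φ x y a = (ContinuousLinearMap.adjoint (R.V x)) ∘L (R.ρ a) ∘L (R.W y)) ∧
    (IsSchurMultiplier ι φ →
      ∃ R : OpValuedRep A H X, NondegenerateRep R.ρ ∧
        (∃ C : ℝ, ∀ x : X, ‖R.V x‖ ≤ C) ∧ (∃ C : ℝ, ∀ y : X, ‖R.W y‖ ≤ C) ∧
        (∀ (x y : X) (a : A),
          φ x y a = (ContinuousLinearMap.adjoint (R.V x)) ∘L (R.ρ a) ∘L (R.W y)) ∧
        schurNorm ι φ = (⨆ x : X, ‖R.V x‖) * (⨆ y : X, ‖R.W y‖)) :=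
  schur_A_multiplier_iff_general ι (AddMonoidHomClass.isometry_of_norm ι hisom).injective φ

end
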